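/- arXiv:1211.2224 — 2 statements merged into one kernel-verified Lean document; each statement's English description precedes it below -/
import Mathlib

section
/- Let Ω = {(x₁,x₂) ∈ ℝ² : 0 < x₂ < x₁ < h} be an isosceles right triangle with legs of length h > 0, and let Γ = {x₁ = h, x₂ ∈ [0,h]} be one leg. Let ẑ₀ be the unique root of the equation tan(z) + tanh(z) = 0 in the interval (0,π) (ẑ₀ ≈ 2.3650). Then the sharp constant C₂(Ω,Γ) in the inequality ‖w‖_{L²(Γ)} ≤ C₂‖∇w‖_{L²(Ω)} for all w ∈ H̃¹(Ω,Γ) is equal to ( (ẑ₀/h)·tanh(ẑ₀) )^{-1/2}. -/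
open MeasureTheory Real

lemma aux_hasSum_cplx (x : ℂ) (hx : x ∈ Complex.integerComplement) :
    HasSum (fun n : ℕ => 2 * x / (x ^ 2 - ((n : ℂ) + 1) ^ 2))
      (π * Complex.cot (π * x) - 1 / x) := by
  have h1 := (summable_cotTerm hx).hasSum
  have h2 := cot_series_rep' hx
  rw [h2]
  have : (fun n : ℕ => 2 * x / (x ^ 2 - ((n : ℂ) + 1) ^ 2)) = fun n => cotTerm x n := by
    funext n
    have e := cotTerm_identity hx n
    rw [e, sq_sub_sq]
    ring
  rw [this]
  exact h1

lemma aux_hs_congr {E : Type*} [AddCommMonoid E] [TopologicalSpace E] {f g : ℕ → E} {a b : E}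
    (hf : HasSum f a) (h1 : ∀ n, g n = f n) (h2 : b = a) : HasSum g b := by
  have : g = f := funext h1
  rw [this, h2]; exact hf

lemma aux_sum_cot (a : ℝ) (ha : 0 < a) (ha1 : a < 1) :
    HasSum (fun n : ℕ => 1 / (((n : ℝ) + 1) ^ 2 - a ^ 2))
      ((1 - π * a * (cos (π * a) / sin (π * a))) / (2 * a ^ 2)) := by
  have hx : (a : ℂ) ∈ Complex.integerComplement := by
    rintro ⟨n, hn⟩
    have hn' : (n : ℝ) = a := by exact_mod_cast hn
    have h0 : (0 : ℤ) < n := by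
      have : (0 : ℝ) < n := by rw [hn']; exact ha
      exact_mod_cast this
    have h1 : n < (1 : ℤ) := by
      have : (n : ℝ) < 1 := by rw [hn']; exact ha1
      exact_mod_cast this
    omega
  have h := aux_hasSum_cplx a hx
  have h' : HasSum (fun n : ℕ => 2 * a / (a ^ 2 - ((n : ℝ) + 1) ^ 2))
      (π * (cos (π * a) / sin (π * a)) - 1 / a) := by
    rw [← Complex.hasSum_ofReal]
    refine aux_hs_congr h ?_ ?_
    · intro n; push_cast; rfl
    · rw [Complex.cot]; push_cast; rfl
  have h2 := h'.mul_left (-(1 / (2 * a)))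
  refine aux_hs_congr h2 ?_ ?_
  · intro n
    have : a ^ 2 - ((n : ℝ) + 1) ^ 2 ≠ 0 := by
      have : (0 : ℝ) ≤ n := Nat.cast_nonneg n
      nlinarith
    have h3 : ((n : ℝ) + 1) ^ 2 - a ^ 2 ≠ 0 := by
      have : (0 : ℝ) ≤ n := Nat.cast_nonneg n
      nlinarith
    field_simp
    ring
  · field_simp
    ring

lemma aux_sum_coth (b : ℝ) (hb : 0 < b) :
    HasSum (fun n : ℕ => 1 / (((n : ℝ) + 1) ^ 2 + b ^ 2))
      ((π * b * (cosh (π * b) / sinh (π * b)) - 1) / (2 * b ^ 2)) := by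
  have hx : (b : ℂ) * Complex.I ∈ Complex.integerComplement := by
    rintro ⟨n, hn⟩
    have := congrArg Complex.im hn
    simp at this
    linarith
  have h := aux_hasSum_cplx _ hx
  have h2 := h.mul_left (Complex.I * (1 / (2 * b)))
  have hs : 0 < sinh (π * b) := by rw [Real.sinh_pos_iff]; positivity
  have hs' : Complex.sinh (π * b) ≠ 0 := by
    have : ((sinh (π * b) : ℝ) : ℂ) ≠ 0 := by exact_mod_cast hs.ne'
    simpa using this
  have hbc : (b : ℂ) ≠ 0 := by exact_mod_cast hb.ne'
  rw [← Complex.hasSum_ofReal]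
  refine aux_hs_congr h2 ?_ ?_
  · intro n
    have h3 : ((n : ℝ) + 1) ^ 2 + b ^ 2 ≠ 0 := by positivity
    have h3 : ((n : ℂ) + 1) ^ 2 + b ^ 2 ≠ 0 := by exact_mod_cast h3
    have h4 : ((b : ℂ) * Complex.I) ^ 2 - ((n : ℂ) + 1) ^ 2 = -(((n : ℂ) + 1) ^ 2 + b ^ 2) := by
      rw [mul_pow, Complex.I_sq]; ring
    rw [h4]
    push_cast
    field_simp
    rw [Complex.I_sq]; ring
  · rw [Complex.cot, ← mul_assoc (π : ℂ), Complex.cos_mul_I, Complex.sin_mul_I]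
    push_cast
    field_simp

/-- Perron certificate -/
lemma aux_schur_row (z : ℝ) (hz0 : 0 < z) (hz1 : z < π)
    (hcot : cos z / sin z = - (cosh z / sinh z)) (k N : ℕ) :
    ∑ l ∈ Finset.range N, ((l + 1 : ℝ) ^ 2 / ((l + 1 : ℝ) ^ 4 - (z / π) ^ 4)) /
        ((k + 1 : ℝ) ^ 2 + (l + 1 : ℝ) ^ 2)
      + π * (cosh (π * (k + 1)) / sinh (π * (k + 1))) / (2 * (k + 1)) *
        ((k + 1 : ℝ) ^ 2 / ((k + 1 : ℝ) ^ 4 - (z / π) ^ 4))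
      ≤ π ^ 2 * (cosh z / sinh z) / (2 * z) *
        ((k + 1 : ℝ) ^ 2 / ((k + 1 : ℝ) ^ 4 - (z / π) ^ 4)) := by
  have hpi := Real.pi_pos
  obtain ⟨a, ha⟩ : ∃ a, a = z / π := ⟨_, rfl⟩
  have hza : z = π * a := by rw [ha]; field_simp
  have ha0 : 0 < a := by rw [ha]; positivity
  have ha1 : a < 1 := by rw [ha, div_lt_one hpi]; exact hz1
  rw [← ha]
  have S1 := aux_sum_cot a ha0 ha1
  have S2 := aux_sum_coth a ha0
  have S3 := aux_sum_coth (k + 1 : ℝ) (by positivity)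
  rw [← hza] at S1 S2
  rw [hcot] at S1
  obtain ⟨c, hc⟩ : ∃ c, c = cosh z / sinh z := ⟨_, rfl⟩
  obtain ⟨d, hd⟩ : ∃ d, d = cosh (π * (k + 1 : ℝ)) / sinh (π * (k + 1 : ℝ)) := ⟨_, rfl⟩
  rw [← hc] at S1 S2 ⊢
  rw [← hd] at S3 ⊢
  obtain ⟨m, hm⟩ : ∃ m : ℝ, m = k + 1 := ⟨_, rfl⟩
  have hm1 : 1 ≤ m := by rw [hm]; have : (0 : ℝ) ≤ k := Nat.cast_nonneg k; linarith
  rw [← hm] at S3 ⊢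
  have hma : 0 < m ^ 2 - a ^ 2 := by nlinarith
  have hma2 : 0 < m ^ 2 + a ^ 2 := by positivity
  have hm4 : m ^ 4 - a ^ 4 = (m ^ 2 - a ^ 2) * (m ^ 2 + a ^ 2) := by ring
  have hm4' : 0 < m ^ 4 - a ^ 4 := by rw [hm4]; positivity
  have S := ((S1.mul_left (1 / (2 * (a ^ 2 + m ^ 2)))).add
    (S2.mul_left (1 / (2 * (m ^ 2 - a ^ 2))))).add (S3.mul_left (-(m ^ 2 / (m ^ 4 - a ^ 4))))
  have hterm : ∀ l : ℕ, ((l + 1 : ℝ) ^ 2 / ((l + 1 : ℝ) ^ 4 - a ^ 4)) / (m ^ 2 + (l + 1 : ℝ) ^ 2)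
     = 1 / (2 * (a ^ 2 + m ^ 2)) * (1 / ((l + 1 : ℝ) ^ 2 - a ^ 2)) +
       1 / (2 * (m ^ 2 - a ^ 2)) * (1 / ((l + 1 : ℝ) ^ 2 + a ^ 2)) +
       -(m ^ 2 / (m ^ 4 - a ^ 4)) * (1 / ((l + 1 : ℝ) ^ 2 + m ^ 2)) := by
    intro l
    obtain ⟨s, hs⟩ : ∃ s : ℝ, s = l + 1 := ⟨_, rfl⟩
    have hs1 : 1 ≤ s := by rw [hs]; have : (0 : ℝ) ≤ l := Nat.cast_nonneg l; linarith
    rw [← hs]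
    have hsa : 0 < s ^ 2 - a ^ 2 := by nlinarith
    have hs4 : s ^ 4 - a ^ 4 = (s ^ 2 - a ^ 2) * (s ^ 2 + a ^ 2) := by ring
    rw [hs4, hm4]
    have h1 := hsa.ne'
    have h2 := hma.ne'
    have h3 : s ^ 2 + m ^ 2 ≠ 0 := by positivity
    have h3' : m ^ 2 + s ^ 2 ≠ 0 := by positivity
    have h4 : s ^ 2 + a ^ 2 ≠ 0 := by positivity
    have h5 : m ^ 2 + a ^ 2 ≠ 0 := by positivity
    have h5' : a ^ 2 + m ^ 2 ≠ 0 := by positivity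
    rw [add_comm (a ^ 2) (m ^ 2), add_comm (s ^ 2) (m ^ 2)]
    field_simp
    ring
  have hle := S.summable.sum_le_tsum (Finset.range N) (by
    intro l _
    rw [← hterm l]
    have : (1 : ℝ) ≤ l + 1 := by have : (0 : ℝ) ≤ l := Nat.cast_nonneg l; linarith
    have : (0 : ℝ) ≤ (l + 1) ^ 4 - a ^ 4 := by
      have := pow_le_pow_left₀ ha0.le (ha1.le.trans this) 4
      linarith
    positivity)
  rw [S.tsum_eq] at hle
  rw [Finset.sum_congr rfl (fun l _ => (hterm l))]
  refine (add_le_add_left hle _).trans (le_of_eq ?_)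
  rw [hm4, hza]
  have h2 := hma.ne'
  have h5 : m ^ 2 + a ^ 2 ≠ 0 := by positivity
  rw [add_comm (a ^ 2) (m ^ 2)]
  field_simp
  ring

lemma aux_schur (N : ℕ) (K : ℕ → ℕ → ℝ) (p b : ℕ → ℝ) (μ : ℝ)
    (hK : ∀ k l, 0 ≤ K k l) (hsymm : ∀ k l, K k l = K l k) (hp : ∀ k, 0 < p k)
    (hrow : ∀ k ∈ Finset.range N, ∑ l ∈ Finset.range N, K k l * p l ≤ μ * p k) :
    ∑ k ∈ Finset.range N, ∑ l ∈ Finset.range N, K k l * (b k * b l) ≤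
      μ * ∑ k ∈ Finset.range N, b k ^ 2 := by
  have h1 : ∀ k l, K k l * (b k * b l) ≤
      (K k l * p l * (b k ^ 2 / p k)) / 2 + (K l k * p k * (b l ^ 2 / p l)) / 2 := by
    intro k l
    have hk := hp k
    have hl := hp l
    rw [hsymm l k]
    have : b k * b l ≤ (p l * (b k ^ 2 / p k) + p k * (b l ^ 2 / p l)) / 2 := by
      have : p l * (b k ^ 2 / p k) + p k * (b l ^ 2 / p l) - 2 * (b k * b l)
        = (p l * b k - p k * b l) ^ 2 / (p k * p l) := by
        field_simp
        ring
      have h0 : 0 ≤ (p l * b k - p k * b l) ^ 2 / (p k * p l) := by positivity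
      linarith
    have := mul_le_mul_of_nonneg_left this (hK k l)
    linarith
  have h2 : ∑ k ∈ Finset.range N, ∑ l ∈ Finset.range N, (K k l * p l * (b k ^ 2 / p k)) / 2
      ≤ (μ * ∑ k ∈ Finset.range N, b k ^ 2) / 2 := by
    rw [Finset.mul_sum, Finset.sum_div]
    refine Finset.sum_le_sum fun k hk => ?_
    rw [← Finset.sum_div, ← Finset.sum_mul]
    have hk' := hp k
    have := mul_le_mul_of_nonneg_right (hrow k hk) (show 0 ≤ b k ^ 2 / p k by positivity)
    have e : μ * p k * (b k ^ 2 / p k) = μ * b k ^ 2 := by field_simp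
    linarith
  calc _ ≤ ∑ k ∈ Finset.range N, ∑ l ∈ Finset.range N,
      ((K k l * p l * (b k ^ 2 / p k)) / 2 + (K l k * p k * (b l ^ 2 / p l)) / 2) :=
        Finset.sum_le_sum fun k _ => Finset.sum_le_sum fun l _ => h1 k l
    _ = ∑ k ∈ Finset.range N, ∑ l ∈ Finset.range N, (K k l * p l * (b k ^ 2 / p k)) / 2 +
        ∑ k ∈ Finset.range N, ∑ l ∈ Finset.range N, (K l k * p k * (b l ^ 2 / p l)) / 2 := by
        simp only [Finset.sum_add_distrib]
    _ ≤ _ := by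
        rw [Finset.sum_comm (f := fun k l => (K l k * p k * (b l ^ 2 / p l)) / 2)]
        linarith

def auxTri (h : ℝ) : Set (ℝ × ℝ) := {p | 0 < p.2 ∧ p.2 < p.1 ∧ p.1 < h}

lemma auxTri_meas (h : ℝ) : MeasurableSet (auxTri h) := by
  apply IsOpen.measurableSet
  have h1 : IsOpen {p : ℝ × ℝ | 0 < p.2} := isOpen_lt continuous_const continuous_snd
  have h2 : IsOpen {p : ℝ × ℝ | p.2 < p.1} := isOpen_lt continuous_snd continuous_fst
  have h3 : IsOpen {p : ℝ × ℝ | p.1 < h} := isOpen_lt continuous_fst continuous_const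
  exact h1.inter (h2.inter h3)

lemma auxTri_int (h : ℝ) (f : ℝ × ℝ → ℝ) (hf : Continuous f) : IntegrableOn f (auxTri h) := by
  refine (hf.continuousOn.integrableOn_compact
    (isCompact_Icc (a := ((0 : ℝ), (0 : ℝ))) (b := (h, h)))).mono_set ?_
  rintro ⟨x, y⟩ ⟨h1, h2, h3⟩
  simp only at h1 h2 h3
  refine ⟨⟨?_, ?_⟩, ⟨?_, ?_⟩⟩ <;> simp only <;> linarith

lemma auxTri_fubini1 (h : ℝ) (hh : 0 < h) (f : ℝ × ℝ → ℝ) (hf : Continuous f) :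
    ∫ p in auxTri h, f p = ∫ x in (0 : ℝ)..h, ∫ y in (0 : ℝ)..x, f (x, y) := by
  have hi := (integrable_indicator_iff (auxTri_meas h)).2 (auxTri_int h f hf)
  rw [← integral_indicator (auxTri_meas h), Measure.volume_eq_prod]
  rw [Measure.volume_eq_prod] at hi
  rw [integral_prod _ hi, intervalIntegral.integral_of_le hh.le, integral_Ioc_eq_integral_Ioo,
    ← integral_indicator measurableSet_Ioo]
  refine integral_congr_ae (Filter.Eventually.of_forall fun x => ?_)
  simp only
  by_cases hx : x ∈ Set.Ioo 0 h
  · rw [Set.indicator_of_mem hx, intervalIntegral.integral_of_le hx.1.le,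
      integral_Ioc_eq_integral_Ioo, ← integral_indicator measurableSet_Ioo]
    congr 1
    funext y
    by_cases hy : y ∈ Set.Ioo 0 x
    · rw [Set.indicator_of_mem hy, Set.indicator_of_mem]
      exact ⟨hy.1, hy.2, hx.2⟩
    · rw [Set.indicator_of_notMem hy, Set.indicator_of_notMem]
      rintro ⟨h1, h2, h3⟩
      exact hy ⟨h1, h2⟩
  · rw [Set.indicator_of_notMem hx]
    have : ∀ y, (auxTri h).indicator f (x, y) = 0 := by
      intro y
      rw [Set.indicator_of_notMem]
      rintro ⟨h1, h2, h3⟩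
      exact hx ⟨h1.trans h2, h3⟩
    simp [this]

lemma auxTri_fubini2 (h : ℝ) (hh : 0 < h) (f : ℝ × ℝ → ℝ) (hf : Continuous f) :
    ∫ p in auxTri h, f p = ∫ y in (0 : ℝ)..h, ∫ x in y..h, f (x, y) := by
  have hi := (integrable_indicator_iff (auxTri_meas h)).2 (auxTri_int h f hf)
  rw [← integral_indicator (auxTri_meas h), Measure.volume_eq_prod]
  rw [Measure.volume_eq_prod] at hi
  rw [integral_prod_symm _ hi, intervalIntegral.integral_of_le hh.le, integral_Ioc_eq_integral_Ioo,
    ← integral_indicator measurableSet_Ioo]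
  refine integral_congr_ae (Filter.Eventually.of_forall fun y => ?_)
  simp only
  by_cases hy : y ∈ Set.Ioo 0 h
  · rw [Set.indicator_of_mem hy, intervalIntegral.integral_of_le hy.2.le,
      integral_Ioc_eq_integral_Ioo, ← integral_indicator measurableSet_Ioo]
    congr 1
    funext x
    by_cases hx : x ∈ Set.Ioo y h
    · rw [Set.indicator_of_mem hx, Set.indicator_of_mem]
      exact ⟨hy.1, hx.1, hx.2⟩
    · rw [Set.indicator_of_notMem hx, Set.indicator_of_notMem]
      rintro ⟨h1, h2, h3⟩
      exact hx ⟨h2, h3⟩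
  · rw [Set.indicator_of_notMem hy]
    have : ∀ x, (auxTri h).indicator f (x, y) = 0 := by
      intro x
      rw [Set.indicator_of_notMem]
      rintro ⟨h1, h2, h3⟩
      exact hy ⟨h1, h2.trans h3⟩
    simp [this]

lemma aux_green (h : ℝ) (hh : 0 < h) (W Wx Wy P Q R : ℝ × ℝ → ℝ)
    (cW : Continuous W) (cWx : Continuous Wx) (cWy : Continuous Wy)
    (cP : Continuous P) (cQ : Continuous Q) (cR : Continuous R)
    (dWx : ∀ x y, HasDerivAt (fun s => W (s, y)) (Wx (x, y)) x)
    (dWy : ∀ x y, HasDerivAt (fun s => W (x, s)) (Wy (x, y)) y)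
    (dP : ∀ x y, HasDerivAt (fun s => P (s, y)) (R (x, y)) x)
    (dQ : ∀ x y, HasDerivAt (fun s => Q (x, s)) (-R (x, y)) y)
    (hQ0 : ∀ x, Q (x, 0) = 0) (hPQ : ∀ x, P (x, x) = Q (x, x)) :
    ∫ p in auxTri h, (Wx p * P p + Wy p * Q p) = ∫ t in (0 : ℝ)..h, W (h, t) * P (h, t) := by
  rw [integral_add (auxTri_int h (fun p => Wx p * P p) (by fun_prop)) (auxTri_int h (fun p => Wy p * Q p) (by fun_prop))]
  have e1 : ∫ p in auxTri h, (Wx p * P p + W p * R p) =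
      (∫ t in (0 : ℝ)..h, W (h, t) * P (h, t)) - ∫ t in (0 : ℝ)..h, W (t, t) * P (t, t) := by
    rw [auxTri_fubini2 h hh _ (by fun_prop), ← intervalIntegral.integral_sub
      (Continuous.intervalIntegrable (by fun_prop) _ _)
      (Continuous.intervalIntegrable (by fun_prop) _ _)]
    refine intervalIntegral.integral_congr fun y _ => ?_
    exact intervalIntegral.integral_eq_sub_of_hasDerivAt
      (f := fun s => W (s, y) * P (s, y)) (fun x _ => (dWx x y).mul (dP x y))
      (Continuous.intervalIntegrable (by fun_prop) _ _)
  have e2 : ∫ p in auxTri h, (Wy p * Q p + W p * (-R p)) =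
      ∫ t in (0 : ℝ)..h, W (t, t) * P (t, t) := by
    rw [auxTri_fubini1 h hh _ (by fun_prop)]
    refine intervalIntegral.integral_congr fun x _ => ?_
    rw [intervalIntegral.integral_eq_sub_of_hasDerivAt
      (f := fun s => W (x, s) * Q (x, s)) (fun y _ => (dWy x y).mul (dQ x y))
      (Continuous.intervalIntegrable (by fun_prop) _ _), hQ0, hPQ]
    ring
  rw [integral_add (auxTri_int h (fun p => Wx p * P p) (by fun_prop)) (auxTri_int h (fun p => W p * R p) (by fun_prop))] at e1
  rw [integral_add (auxTri_int h (fun p => Wy p * Q p) (by fun_prop)) (auxTri_int h (fun p => W p * (-R p)) (by fun_prop))] at e2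
  have e3 : ∫ p in auxTri h, W p * (-R p) = - ∫ p in auxTri h, W p * R p := by
    rw [← integral_neg]; congr 1; funext p; ring
  linarith

lemma aux_transfer (h : ℝ) (w : EuclideanSpace ℝ (Fin 2) → ℝ) (hw : ContDiff ℝ 1 w) :
    ∃ W Wx Wy : ℝ × ℝ → ℝ, Continuous W ∧ Continuous Wx ∧ Continuous Wy ∧
    (∀ x y, HasDerivAt (fun s => W (s, y)) (Wx (x, y)) x) ∧
    (∀ x y, HasDerivAt (fun s => W (x, s)) (Wy (x, y)) y) ∧
    (∀ x y, W (x, y) = w !₂[x, y]) ∧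
    (∫ x in {x : EuclideanSpace ℝ (Fin 2) |
            0 < x 1 ∧ x 1 < x 0 ∧ x 0 < h}, ‖gradient w x‖ ^ 2) =
      ∫ p in auxTri h, (Wx p ^ 2 + Wy p ^ 2) := by
  have hd : Differentiable ℝ w := hw.differentiable (by norm_num)
  have hc : Continuous (fderiv ℝ w) := hw.continuous_fderiv (by norm_num)
  have cι : Continuous (fun p : ℝ × ℝ => (!₂[p.1, p.2] : EuclideanSpace ℝ (Fin 2))) := by
    fun_prop
  refine ⟨fun p => w !₂[p.1, p.2], fun p => fderiv ℝ w !₂[p.1, p.2] !₂[1, 0],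
    fun p => fderiv ℝ w !₂[p.1, p.2] !₂[0, 1], ?_, ?_, ?_, ?_, ?_, ?_, ?_⟩
  · exact hd.continuous.comp cι
  · exact (hc.comp cι).clm_apply continuous_const
  · exact (hc.comp cι).clm_apply continuous_const
  · intro x y
    have h1 : HasDerivAt (fun s : ℝ => (!₂[s, y] : EuclideanSpace ℝ (Fin 2))) !₂[1, 0] x := by
      have h2 := ((hasDerivAt_id x).smul_const (!₂[1, 0] : EuclideanSpace ℝ (Fin 2))).add_const !₂[0, y]
      rw [one_smul] at h2
      refine h2.congr_of_eventuallyEq (Filter.Eventually.of_forall fun s => ?_)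
      ext i; fin_cases i <;> simp
    exact (hd _).hasFDerivAt.comp_hasDerivAt x h1
  · intro x y
    have h1 : HasDerivAt (fun s : ℝ => (!₂[x, s] : EuclideanSpace ℝ (Fin 2))) !₂[0, 1] y := by
      have h2 := ((hasDerivAt_id y).smul_const (!₂[0, 1] : EuclideanSpace ℝ (Fin 2))).add_const !₂[x, 0]
      rw [one_smul] at h2
      refine h2.congr_of_eventuallyEq (Filter.Eventually.of_forall fun s => ?_)
      ext i; fin_cases i <;> simp
    exact (hd _).hasFDerivAt.comp_hasDerivAt y h1
  · intro x y; rfl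
  · have hg : ∀ x, ‖gradient w x‖ ^ 2 = (fderiv ℝ w x !₂[1, 0]) ^ 2 + (fderiv ℝ w x !₂[0, 1]) ^ 2 := by
      intro x
      have key : ∀ v, fderiv ℝ w x v = inner ℝ (gradient w x) v := by
        intro v
        rw [← toDual_gradient, InnerProductSpace.toDual_apply_apply]
      have g0 : ∀ g : EuclideanSpace ℝ (Fin 2), inner ℝ g !₂[1, 0] = g 0 := by
        intro g; simp [PiLp.inner_apply, Fin.sum_univ_two]
      have g1 : ∀ g : EuclideanSpace ℝ (Fin 2), inner ℝ g !₂[0, 1] = g 1 := by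
        intro g; simp [PiLp.inner_apply, Fin.sum_univ_two]
      rw [key, key, EuclideanSpace.norm_sq_eq, g0, g1]
      simp [Fin.sum_univ_two]
    have mp : MeasurePreserving
        (fun x : EuclideanSpace ℝ (Fin 2) => MeasurableEquiv.finTwoArrow (WithLp.ofLp x)) :=
      (volume_preserving_finTwoArrow ℝ).comp (PiLp.volume_preserving_ofLp (Fin 2))
    have me : MeasurableEmbedding
        (fun x : EuclideanSpace ℝ (Fin 2) => (MeasurableEquiv.finTwoArrow (WithLp.ofLp x) : ℝ × ℝ)) :=
      (MeasurableEquiv.finTwoArrow.measurableEmbedding).comp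
        (MeasurableEquiv.toLp 2 (Fin 2 → ℝ)).symm.measurableEmbedding
    rw [← mp.setIntegral_preimage_emb me]
    refine setIntegral_congr_fun ?_ ?_
    · exact me.measurable (auxTri_meas h)
    · intro x _
      simp only [hg]
      have : (!₂[x 0, x 1] : EuclideanSpace ℝ (Fin 2)) = x := by
        ext i; fin_cases i <;> rfl
      simp only [MeasurableEquiv.finTwoArrow_apply, this]

noncomputable def auxPhi (N : ℕ) (c κ : ℕ → ℝ) (p : ℝ × ℝ) : ℝ :=
  ∑ k ∈ Finset.range N, c k * (cosh (κ k * p.1) * cos (κ k * p.2) + cos (κ k * p.1) * cosh (κ k * p.2))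

noncomputable def auxP (N : ℕ) (c κ : ℕ → ℝ) (p : ℝ × ℝ) : ℝ :=
  ∑ k ∈ Finset.range N, c k * κ k *
    (sinh (κ k * p.1) * cos (κ k * p.2) - sin (κ k * p.1) * cosh (κ k * p.2))

noncomputable def auxQ (N : ℕ) (c κ : ℕ → ℝ) (p : ℝ × ℝ) : ℝ :=
  ∑ k ∈ Finset.range N, c k * κ k *
    (cos (κ k * p.1) * sinh (κ k * p.2) - cosh (κ k * p.1) * sin (κ k * p.2))

noncomputable def auxR (N : ℕ) (c κ : ℕ → ℝ) (p : ℝ × ℝ) : ℝ :=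
  ∑ k ∈ Finset.range N, c k * κ k ^ 2 *
    (cosh (κ k * p.1) * cos (κ k * p.2) - cos (κ k * p.1) * cosh (κ k * p.2))

lemma auxPhi_cont (N : ℕ) (c κ : ℕ → ℝ) : Continuous (auxPhi N c κ) := by
  unfold auxPhi; fun_prop
lemma auxP_cont (N : ℕ) (c κ : ℕ → ℝ) : Continuous (auxP N c κ) := by
  unfold auxP; fun_prop
lemma auxQ_cont (N : ℕ) (c κ : ℕ → ℝ) : Continuous (auxQ N c κ) := by
  unfold auxQ; fun_prop
lemma auxR_cont (N : ℕ) (c κ : ℕ → ℝ) : Continuous (auxR N c κ) := by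
  unfold auxR; fun_prop

lemma aux_dmul (κ x : ℝ) : HasDerivAt (fun s : ℝ => κ * s) κ x := by
  simpa using (hasDerivAt_id x).const_mul κ

lemma auxPhi_dx (N : ℕ) (c κ : ℕ → ℝ) (x y : ℝ) :
    HasDerivAt (fun s => auxPhi N c κ (s, y)) (auxP N c κ (x, y)) x := by
  unfold auxPhi auxP
  refine HasDerivAt.fun_sum fun k _ => ?_
  have := ((((aux_dmul (κ k) x).cosh).mul_const (cos (κ k * y))).add
    (((aux_dmul (κ k) x).cos).mul_const (cosh (κ k * y)))).const_mul (c k)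
  refine this.congr_deriv ?_
  ring

lemma auxPhi_dy (N : ℕ) (c κ : ℕ → ℝ) (x y : ℝ) :
    HasDerivAt (fun s => auxPhi N c κ (x, s)) (auxQ N c κ (x, y)) y := by
  unfold auxPhi auxQ
  refine HasDerivAt.fun_sum fun k _ => ?_
  have := ((((aux_dmul (κ k) y).cos).const_mul (cosh (κ k * x))).add
    (((aux_dmul (κ k) y).cosh).const_mul (cos (κ k * x)))).const_mul (c k)
  refine this.congr_deriv ?_
  ring

lemma auxP_dx (N : ℕ) (c κ : ℕ → ℝ) (x y : ℝ) :
    HasDerivAt (fun s => auxP N c κ (s, y)) (auxR N c κ (x, y)) x := by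
  unfold auxP auxR
  refine HasDerivAt.fun_sum fun k _ => ?_
  have := ((((aux_dmul (κ k) x).sinh).mul_const (cos (κ k * y))).sub
    (((aux_dmul (κ k) x).sin).mul_const (cosh (κ k * y)))).const_mul (c k * κ k)
  refine this.congr_deriv ?_
  ring

lemma auxQ_dy (N : ℕ) (c κ : ℕ → ℝ) (x y : ℝ) :
    HasDerivAt (fun s => auxQ N c κ (x, s)) (-auxR N c κ (x, y)) y := by
  unfold auxQ auxR
  rw [← Finset.sum_neg_distrib]
  refine HasDerivAt.fun_sum fun k _ => ?_
  have := ((((aux_dmul (κ k) y).sinh).const_mul (cos (κ k * x))).sub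
    (((aux_dmul (κ k) y).sin).const_mul (cosh (κ k * x)))).const_mul (c k * κ k)
  refine this.congr_deriv ?_
  ring

lemma auxQ_zero (N : ℕ) (c κ : ℕ → ℝ) (x : ℝ) : auxQ N c κ (x, 0) = 0 := by
  simp [auxQ]

lemma auxPQ (N : ℕ) (c κ : ℕ → ℝ) (x : ℝ) : auxP N c κ (x, x) = auxQ N c κ (x, x) := by
  unfold auxP auxQ
  refine Finset.sum_congr rfl fun k _ => ?_
  ring

lemma aux_green2 (h : ℝ) (hh : 0 < h) (W Wx Wy : ℝ × ℝ → ℝ) (N : ℕ) (c κ : ℕ → ℝ)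
    (cW : Continuous W) (cWx : Continuous Wx) (cWy : Continuous Wy)
    (dWx : ∀ x y, HasDerivAt (fun s => W (s, y)) (Wx (x, y)) x)
    (dWy : ∀ x y, HasDerivAt (fun s => W (x, s)) (Wy (x, y)) y) :
    ∫ p in auxTri h, (Wx p * auxP N c κ p + Wy p * auxQ N c κ p) =
      ∫ t in (0 : ℝ)..h, W (h, t) * auxP N c κ (h, t) :=
  aux_green h hh W Wx Wy _ _ (auxR N c κ) cW cWx cWy (auxP_cont N c κ) (auxQ_cont N c κ)
    (auxR_cont N c κ) dWx dWy (auxP_dx N c κ) (auxQ_dy N c κ) (auxQ_zero N c κ) (auxPQ N c κ)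

lemma aux_energy (h : ℝ) (hh : 0 < h) (N : ℕ) (c κ : ℕ → ℝ) :
    ∫ p in auxTri h, (auxP N c κ p ^ 2 + auxQ N c κ p ^ 2) =
      ∫ t in (0 : ℝ)..h, auxPhi N c κ (h, t) * auxP N c κ (h, t) := by
  rw [← aux_green2 h hh _ _ _ N c κ (auxPhi_cont N c κ) (auxP_cont N c κ) (auxQ_cont N c κ)
    (auxPhi_dx N c κ) (auxPhi_dy N c κ)]
  simp only [sq]

lemma aux_int_cos (h : ℝ) (hh : 0 < h) (j : ℤ) :
    ∫ t in (0 : ℝ)..h, cos (π * j / h * t) = if j = 0 then h else 0 := by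
  split_ifs with hj
  · simp [hj]
  · have hj' : (j : ℝ) ≠ 0 := by exact_mod_cast hj
    have hκ : π * j / h ≠ 0 := by have := Real.pi_ne_zero; positivity
    rw [intervalIntegral.integral_eq_sub_of_hasDerivAt
      (f := fun t => sin (π * j / h * t) / (π * j / h))]
    · have : π * j / h * h = j * π := by field_simp
      simp only [this, Real.sin_int_mul_pi]
      simp
    · intro t _
      refine (((aux_dmul (π * j / h) t).sin).div_const (π * j / h)).congr_deriv ?_
      field_simp
    · exact Continuous.intervalIntegrable (by fun_prop) _ _

lemma aux_int_cos_cos (h : ℝ) (hh : 0 < h) (k l : ℕ) :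
    ∫ t in (0 : ℝ)..h, cos (π * (k + 1) / h * t) * cos (π * (l + 1) / h * t) =
      if k = l then h / 2 else 0 := by
  have e : ∀ t : ℝ, cos (π * (k + 1) / h * t) * cos (π * (l + 1) / h * t) =
      (1 / 2) * cos (π * ((k - l : ℤ) : ℝ) / h * t) +
      (1 / 2) * cos (π * ((k + l + 2 : ℤ) : ℝ) / h * t) := by
    intro t
    have e1 : π * ((k - l : ℤ) : ℝ) / h * t = π * (k + 1) / h * t - π * (l + 1) / h * t := by
      push_cast; ring
    have e2 : π * ((k + l + 2 : ℤ) : ℝ) / h * t = π * (k + 1) / h * t + π * (l + 1) / h * t := by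
      push_cast; ring
    rw [e1, e2, cos_sub, cos_add]
    ring
  simp_rw [e]
  rw [intervalIntegral.integral_add (Continuous.intervalIntegrable (by fun_prop) _ _)
    (Continuous.intervalIntegrable (by fun_prop) _ _), intervalIntegral.integral_const_mul,
    intervalIntegral.integral_const_mul, aux_int_cos h hh, aux_int_cos h hh]
  have h2 : ¬ ((k + l + 2 : ℤ) = 0) := by omega
  rw [if_neg h2]
  by_cases hkl : k = l
  · rw [if_pos hkl, if_pos (by omega)]; ring
  · rw [if_neg hkl, if_neg (by omega)]; ring

lemma aux_cos_end (h : ℝ) (hh : 0 < h) (k : ℕ) : cos (π * (k + 1) / h * h) = (-1) ^ (k + 1) := by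
  have : π * (k + 1) / h * h = ((k + 1 : ℕ) : ℝ) * π := by push_cast; field_simp
  rw [this, Real.cos_nat_mul_pi]

lemma aux_sin_end (h : ℝ) (hh : 0 < h) (k : ℕ) : sin (π * (k + 1) / h * h) = 0 := by
  have : π * (k + 1) / h * h = ((k + 1 : ℕ) : ℝ) * π := by push_cast; field_simp
  rw [this, Real.sin_nat_mul_pi]

lemma aux_int_cosh_cos (h : ℝ) (hh : 0 < h) (k l : ℕ) :
    ∫ t in (0 : ℝ)..h, cosh (π * (l + 1) / h * t) * cos (π * (k + 1) / h * t) =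
      (π * (l + 1) / h) * sinh (π * (l + 1) / h * h) * (-1) ^ (k + 1) /
        ((π * (l + 1) / h) ^ 2 + (π * (k + 1) / h) ^ 2) := by
  have hc := aux_cos_end h hh k
  have hs := aux_sin_end h hh k
  have hpi := Real.pi_pos
  have ha : 0 < π * (l + 1) / h := by positivity
  have hb : 0 < π * (k + 1) / h := by positivity
  set a := π * (l + 1) / h
  set b := π * (k + 1) / h
  have hab : a ^ 2 + b ^ 2 ≠ 0 := by positivity
  rw [intervalIntegral.integral_eq_sub_of_hasDerivAt
      (f := fun t => (a * (sinh (a * t) * cos (b * t)) + b * (cosh (a * t) * sin (b * t))) /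
        (a ^ 2 + b ^ 2))]
  · simp only [hc, hs]
    simp
    ring
  · intro t _
    have := ((((aux_dmul a t).sinh.mul (aux_dmul b t).cos).const_mul a).add
      (((aux_dmul a t).cosh.mul (aux_dmul b t).sin).const_mul b)).div_const (a ^ 2 + b ^ 2)
    refine this.congr_deriv ?_
    field_simp
    ring
  · exact Continuous.intervalIntegrable (by fun_prop) _ _

lemma aux_int_sum (h : ℝ) (N : ℕ) (f : ℕ → ℝ → ℝ) (hf : ∀ k, Continuous (f k)) :
    ∫ t in (0 : ℝ)..h, ∑ k ∈ Finset.range N, f k t =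
      ∑ k ∈ Finset.range N, ∫ t in (0 : ℝ)..h, f k t :=
  intervalIntegral.integral_finsetSum fun k _ => (hf k).intervalIntegrable _ _

lemma aux_qsq (h : ℝ) (hh : 0 < h) (N : ℕ) (a : ℕ → ℝ) :
    ∫ t in (0 : ℝ)..h, (∑ k ∈ Finset.range N, a k * cos (π * (k + 1) / h * t)) ^ 2 =
      h / 2 * ∑ k ∈ Finset.range N, a k ^ 2 := by
  have e : ∀ t : ℝ, (∑ k ∈ Finset.range N, a k * cos (π * (k + 1) / h * t)) ^ 2 =
      ∑ k ∈ Finset.range N, ∑ l ∈ Finset.range N,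
        a k * a l * (cos (π * (k + 1) / h * t) * cos (π * (l + 1) / h * t)) := by
    intro t
    rw [sq, Finset.sum_mul_sum]
    refine Finset.sum_congr rfl fun k _ => Finset.sum_congr rfl fun l _ => ?_
    ring
  simp_rw [e]
  rw [aux_int_sum h N _ (by intro k; fun_prop), Finset.mul_sum]
  refine Finset.sum_congr rfl fun k hk => ?_
  rw [aux_int_sum h N _ (by intro k; fun_prop)]
  simp_rw [intervalIntegral.integral_const_mul, aux_int_cos_cos h hh]
  simp only [mul_ite, mul_zero, Finset.sum_ite_eq, hk, if_true]
  ring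

lemma aux_P_end (h : ℝ) (hh : 0 < h) (N : ℕ) (a : ℕ → ℝ) (t : ℝ) :
    auxP N (fun k => a k / ((π * (k + 1) / h) * sinh (π * (k + 1) / h * h)))
      (fun k => π * (k + 1) / h) (h, t) =
    ∑ k ∈ Finset.range N, a k * cos (π * (k + 1) / h * t) := by
  unfold auxP
  refine Finset.sum_congr rfl fun k _ => ?_
  have hpi := Real.pi_pos
  have hb : 0 < π * (k + 1) / h := by positivity
  have hs : 0 < sinh (π * (k + 1) / h * h) := by rw [Real.sinh_pos_iff]; positivity
  simp only [aux_sin_end h hh k]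
  generalize sinh (π * (k + 1) / h * h) = S at *
  generalize π * (k + 1) / h = b at *
  field_simp
  ring

lemma aux_Phi_end (h : ℝ) (hh : 0 < h) (N : ℕ) (a : ℕ → ℝ) (t : ℝ) :
    auxPhi N (fun k => a k / ((π * (k + 1) / h) * sinh (π * (k + 1) / h * h)))
      (fun k => π * (k + 1) / h) (h, t) =
    ∑ l ∈ Finset.range N, a l / ((π * (l + 1) / h) * sinh (π * (l + 1) / h * h)) *
      (cosh (π * (l + 1) / h * h) * cos (π * (l + 1) / h * t)
        + (-1) ^ (l + 1) * cosh (π * (l + 1) / h * t)) := by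
  unfold auxPhi
  refine Finset.sum_congr rfl fun k _ => ?_
  simp only [aux_cos_end h hh k]

lemma aux_form (h : ℝ) (hh : 0 < h) (N : ℕ) (a : ℕ → ℝ) :
    ∫ t in (0 : ℝ)..h,
      (∑ l ∈ Finset.range N, a l / ((π * (l + 1) / h) * sinh (π * (l + 1) / h * h)) *
      (cosh (π * (l + 1) / h * h) * cos (π * (l + 1) / h * t)
        + (-1) ^ (l + 1) * cosh (π * (l + 1) / h * t))) *
      (∑ k ∈ Finset.range N, a k * cos (π * (k + 1) / h * t)) =
    h ^ 2 / π ^ 2 * ∑ k ∈ Finset.range N, ∑ l ∈ Finset.range N,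
      ((if l = k then π * (cosh (π * (k + 1)) / sinh (π * (k + 1))) / (2 * (k + 1)) else 0) +
        1 / ((k + 1 : ℝ) ^ 2 + (l + 1 : ℝ) ^ 2)) * (((-1) ^ (k + 1) * a k) * ((-1) ^ (l + 1) * a l)) := by
  have e : ∀ t : ℝ, (∑ l ∈ Finset.range N, a l / ((π * (l + 1) / h) * sinh (π * (l + 1) / h * h)) *
      (cosh (π * (l + 1) / h * h) * cos (π * (l + 1) / h * t)
        + (-1) ^ (l + 1) * cosh (π * (l + 1) / h * t))) *
      (∑ k ∈ Finset.range N, a k * cos (π * (k + 1) / h * t)) =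
      ∑ k ∈ Finset.range N, ∑ l ∈ Finset.range N,
        (a k * a l * (cosh (π * (l + 1) / h * h) / ((π * (l + 1) / h) * sinh (π * (l + 1) / h * h))) *
          (cos (π * (l + 1) / h * t) * cos (π * (k + 1) / h * t)) +
        a k * a l * ((-1) ^ (l + 1) / ((π * (l + 1) / h) * sinh (π * (l + 1) / h * h))) *
          (cosh (π * (l + 1) / h * t) * cos (π * (k + 1) / h * t))) := by
    intro t
    rw [mul_comm, Finset.sum_mul_sum]
    refine Finset.sum_congr rfl fun k _ => Finset.sum_congr rfl fun l _ => ?_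
    ring
  simp_rw [e]
  rw [aux_int_sum h N _ (by intro k; fun_prop), Finset.mul_sum]
  refine Finset.sum_congr rfl fun k hk => ?_
  rw [aux_int_sum h N _ (by intro k; fun_prop), Finset.mul_sum]
  refine Finset.sum_congr rfl fun l hl => ?_
  rw [intervalIntegral.integral_add (Continuous.intervalIntegrable (by fun_prop) _ _)
    (Continuous.intervalIntegrable (by fun_prop) _ _),
    intervalIntegral.integral_const_mul, intervalIntegral.integral_const_mul,
    aux_int_cos_cos h hh, aux_int_cosh_cos h hh]
  have hpi := Real.pi_pos
  have hlh : π * (l + 1 : ℝ) / h * h = π * (l + 1) := by field_simp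
  have hs : 0 < sinh (π * (l + 1 : ℝ)) := by rw [Real.sinh_pos_iff]; positivity
  rw [hlh]
  have hkl : (k + 1 : ℝ) ^ 2 + (l + 1 : ℝ) ^ 2 ≠ 0 := by positivity
  have hkl' : (l + 1 : ℝ) ^ 2 + (k + 1 : ℝ) ^ 2 ≠ 0 := by positivity
  have second : a k * a l * ((-1) ^ (l + 1) / (π * (l + 1) / h * sinh (π * (l + 1)))) *
      (π * (l + 1) / h * sinh (π * (l + 1)) * (-1) ^ (k + 1) /
        ((π * (l + 1) / h) ^ 2 + (π * (k + 1) / h) ^ 2)) =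
      h ^ 2 / π ^ 2 * (1 / ((k + 1 : ℝ) ^ 2 + (l + 1 : ℝ) ^ 2) *
        (((-1) ^ (k + 1) * a k) * ((-1) ^ (l + 1) * a l))) := by
    have e1 : (π * (l + 1) / h) ^ 2 + (π * (k + 1) / h) ^ 2 =
      π ^ 2 / h ^ 2 * ((k + 1 : ℝ) ^ 2 + (l + 1 : ℝ) ^ 2) := by ring
    rw [e1]
    generalize sinh (π * (l + 1 : ℝ)) = S at *
    field_simp
  rw [second]
  by_cases hlk : l = k
  · subst hlk
    simp only [if_true]
    have hsgn : ((-1 : ℝ) ^ (l + 1) * a l) * ((-1) ^ (l + 1) * a l) = a l * a l := by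
      have : ((-1 : ℝ) ^ (l + 1)) * ((-1) ^ (l + 1)) = 1 := by
        rw [← mul_pow]; simp
      linear_combination (a l * a l) * this
    rw [hsgn]
    generalize sinh (π * (l + 1 : ℝ)) = S at *
    field_simp
  · simp only [hlk, if_false]
    ring

lemma aux_upper (h : ℝ) (hh : 0 < h) (z : ℝ) (hz0 : 0 < z) (hz1 : z < π)
    (hcot : cos z / sin z = - (cosh z / sinh z)) (N : ℕ) (a : ℕ → ℝ) :
    ∫ p in auxTri h,
      (auxP N (fun k => a k / ((π * (k + 1) / h) * sinh (π * (k + 1) / h * h)))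
        (fun k => π * (k + 1) / h) p ^ 2 +
       auxQ N (fun k => a k / ((π * (k + 1) / h) * sinh (π * (k + 1) / h * h)))
        (fun k => π * (k + 1) / h) p ^ 2) ≤
    (h * (cosh z / sinh z) / z) *
      ∫ t in (0 : ℝ)..h, (∑ k ∈ Finset.range N, a k * cos (π * (k + 1) / h * t)) ^ 2 := by
  have hpi := Real.pi_pos
  rw [aux_energy h hh, aux_qsq h hh]
  simp_rw [aux_P_end h hh, aux_Phi_end h hh]
  rw [aux_form h hh]
  have ha0 : 0 < z / π := by positivity
  have ha1 : z / π < 1 := by rw [div_lt_one hpi]; exact hz1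
  have key := aux_schur N (fun k l =>
      ((if l = k then π * (cosh (π * (k + 1)) / sinh (π * (k + 1))) / (2 * (k + 1)) else 0) +
        1 / ((k + 1 : ℝ) ^ 2 + (l + 1 : ℝ) ^ 2)))
    (fun l => (l + 1 : ℝ) ^ 2 / ((l + 1 : ℝ) ^ 4 - (z / π) ^ 4))
    (fun k => (-1) ^ (k + 1) * a k) (π ^ 2 * (cosh z / sinh z) / (2 * z)) ?_ ?_ ?_ ?_
  · have e : ∑ k ∈ Finset.range N, ((-1 : ℝ) ^ (k + 1) * a k) ^ 2 =
        ∑ k ∈ Finset.range N, a k ^ 2 := by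
      refine Finset.sum_congr rfl fun k _ => ?_
      rw [mul_pow, ← pow_mul, mul_comm (k + 1) 2, pow_mul]; simp
    rw [e] at key
    refine (mul_le_mul_of_nonneg_left key (by positivity)).trans (le_of_eq ?_)
    field_simp
  · intro k l
    have hs : 0 < sinh (π * (k + 1 : ℝ)) := by rw [Real.sinh_pos_iff]; positivity
    have hc := Real.cosh_pos (π * (k + 1 : ℝ))
    split_ifs <;> positivity
  · intro k l
    by_cases hkl : l = k
    · subst hkl; simp
    · have : ¬ (k = l) := fun h => hkl h.symm
      simp only [hkl, this, if_false]
      rw [add_comm ((k + 1 : ℝ) ^ 2)]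
  · intro k
    have : (1 : ℝ) ≤ k + 1 := by have : (0 : ℝ) ≤ k := Nat.cast_nonneg k; linarith
    have : (0 : ℝ) < (k + 1) ^ 4 - (z / π) ^ 4 := by
      have := pow_lt_pow_left₀ (ha1.trans_le this) ha0.le (n := 4) (by norm_num)
      linarith
    positivity
  · intro k hk
    refine le_trans (le_of_eq ?_) (aux_schur_row z hz0 hz1 hcot k N)
    simp only [add_mul, Finset.sum_add_distrib, ite_mul, zero_mul, Finset.sum_ite_eq', hk, if_true]
    rw [add_comm]
    congr 1
    refine Finset.sum_congr rfl fun l _ => ?_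
    ring

lemma aux_trigpoly (p : Polynomial ℝ) :
    (fun θ : ℝ => p.eval (cos θ)) ∈
      Submodule.span ℝ (Set.range fun k : ℕ => fun θ : ℝ => cos (k * θ)) := by
  set S := Submodule.span ℝ (Set.range fun k : ℕ => fun θ : ℝ => cos (k * θ)) with hS
  have hmem : ∀ k : ℕ, (fun θ : ℝ => cos (k * θ)) ∈ S := fun k =>
    Submodule.subset_span ⟨k, rfl⟩
  have hmul : ∀ f ∈ S, (fun θ : ℝ => cos θ * f θ) ∈ S := by
    intro f hf
    induction hf using Submodule.span_induction with
    | mem f hf =>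
      obtain ⟨k, rfl⟩ := hf
      rcases k with _ | k
      · have := hmem 1
        simpa using this
      · have := S.add_mem (S.smul_mem (1 / 2 : ℝ) (hmem k)) (S.smul_mem (1 / 2 : ℝ) (hmem (k + 2)))
        refine (congrArg (· ∈ S) ?_).mp this
        funext θ
        simp only [Pi.add_apply, Pi.smul_apply, smul_eq_mul]
        have e1 : (k : ℝ) * θ = ((k + 1 : ℕ) : ℝ) * θ - θ := by push_cast; ring
        have e2 : ((k + 2 : ℕ) : ℝ) * θ = ((k + 1 : ℕ) : ℝ) * θ + θ := by push_cast; ring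
        rw [e1, e2, cos_sub, cos_add]
        ring
    | zero =>
      refine (congrArg (· ∈ S) ?_).mp S.zero_mem
      funext θ
      simp
    | add f g _ _ hf hg =>
      have := S.add_mem hf hg
      refine (congrArg (· ∈ S) ?_).mp this
      funext θ
      simp only [Pi.add_apply]
      ring
    | smul c f _ hf =>
      have := S.smul_mem c hf
      refine (congrArg (· ∈ S) ?_).mp this
      funext θ
      simp only [Pi.smul_apply, smul_eq_mul]
      ring
  have hpow : ∀ n : ℕ, (fun θ : ℝ => cos θ ^ n) ∈ S := by
    intro n
    induction n with
    | zero => simpa using hmem 0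
    | succ n ih =>
      have := hmul _ ih
      refine (congrArg (· ∈ S) ?_).mp this
      funext θ
      ring
  induction p using Polynomial.induction_on' with
  | add p q hp hq =>
    have := S.add_mem hp hq
    refine (congrArg (· ∈ S) ?_).mp this
    funext θ
    simp
  | monomial n c =>
    have := S.smul_mem c (hpow n)
    refine (congrArg (· ∈ S) ?_).mp this
    funext θ
    simp

lemma aux_approx (h : ℝ) (hh : 0 < h) (g : ℝ → ℝ) (hg : Continuous g) (ε : ℝ) (hε : 0 < ε) :
    ∃ (N : ℕ) (a0 : ℝ) (a : ℕ → ℝ), ∀ t ∈ Set.Icc 0 h,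
      |g t - (a0 + ∑ k ∈ Finset.range N, a k * cos (π * (k + 1) / h * t))| < ε := by
  have hpi := Real.pi_pos
  obtain ⟨p, hp⟩ := exists_polynomial_near_of_continuousOn (-1) 1
    (fun x => g (h / π * arccos x)) (by
      apply Continuous.continuousOn
      exact hg.comp (continuous_const.mul Real.continuous_arccos)) ε hε
  obtain ⟨c, hc⟩ := Finsupp.mem_span_range_iff_exists_finsupp.1 (aux_trigpoly p)
  obtain ⟨N, hN⟩ := c.support.exists_nat_subset_range
  refine ⟨N, c 0, fun k => c (k + 1), fun t ht => ?_⟩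
  have ht1 : 0 ≤ π / h * t := by have := ht.1; positivity
  have ht2 : π / h * t ≤ π := by
    have := ht.2
    rw [div_mul_eq_mul_div, div_le_iff₀ hh]
    nlinarith
  have h1 := hp (cos (π / h * t)) ⟨neg_one_le_cos _, cos_le_one _⟩
  rw [Real.arccos_cos ht1 ht2] at h1
  have e1 : h / π * (π / h * t) = t := by field_simp
  rw [e1] at h1
  have h2 := congrFun hc (π / h * t)
  rw [Finsupp.sum_of_support_subset (s := Finset.range (N + 1)) _
    (hN.trans (Finset.range_mono (Nat.le_succ N))) _ (by simp), Finset.sum_range_succ'] at h2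
  simp only [Pi.add_apply, Finset.sum_apply, Pi.smul_apply, smul_eq_mul] at h2
  rw [abs_sub_comm]
  rw [← h2] at h1
  have e2 : (∑ k ∈ Finset.range N, c (k + 1) * cos (((k + 1 : ℕ) : ℝ) * (π / h * t))) +
      c 0 * cos (((0 : ℕ) : ℝ) * (π / h * t)) =
      c 0 + ∑ k ∈ Finset.range N, c (k + 1) * cos (π * (k + 1) / h * t) := by
    rw [add_comm]
    congr 1
    · simp
    · refine Finset.sum_congr rfl fun k _ => ?_
      congr 2
      push_cast
      ring
  rw [e2] at h1
  exact h1

lemma aux_int_q (h : ℝ) (hh : 0 < h) (N : ℕ) (a : ℕ → ℝ) :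
    ∫ t in (0 : ℝ)..h, (∑ k ∈ Finset.range N, a k * cos (π * (k + 1) / h * t)) = 0 := by
  rw [aux_int_sum h N _ (by intro k; fun_prop)]
  refine Finset.sum_eq_zero fun k _ => ?_
  have := aux_int_cos h hh (k + 1 : ℤ)
  rw [if_neg (by omega)] at this
  push_cast at this
  rw [intervalIntegral.integral_const_mul, this, mul_zero]

lemma aux_main_ineq (h : ℝ) (hh : 0 < h) (z : ℝ) (hz0 : 0 < z) (hz1 : z < π)
    (hcot : cos z / sin z = - (cosh z / sinh z)) (W Wx Wy : ℝ × ℝ → ℝ)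
    (cW : Continuous W) (cWx : Continuous Wx) (cWy : Continuous Wy)
    (dWx : ∀ x y, HasDerivAt (fun s => W (s, y)) (Wx (x, y)) x)
    (dWy : ∀ x y, HasDerivAt (fun s => W (x, s)) (Wy (x, y)) y)
    (hmean : ∫ t in (0 : ℝ)..h, W (h, t) = 0) :
    z / h * tanh z * ∫ t in (0 : ℝ)..h, W (h, t) ^ 2 ≤
      ∫ p in auxTri h, (Wx p ^ 2 + Wy p ^ 2) := by
  have hsz : 0 < sinh z := by rw [Real.sinh_pos_iff]; exact hz0
  have hcz := Real.cosh_pos z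
  obtain ⟨lam, hlam⟩ : ∃ lam, lam = z / h * tanh z := ⟨_, rfl⟩
  have hlam0 : 0 < lam := by rw [hlam, Real.tanh_eq_sinh_div_cosh]; positivity
  have hlam1 : h * (cosh z / sinh z) / z = 1 / lam := by
    rw [hlam, Real.tanh_eq_sinh_div_cosh]; field_simp
  rw [← hlam]
  have cg : Continuous fun t => W (h, t) := by fun_prop
  refine le_of_forall_pos_le_add fun δ hδ => ?_
  obtain ⟨N, a0, a, hap⟩ := aux_approx h hh (fun t => W (h, t)) cg (sqrt (δ / (lam * h)))
    (by positivity)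
  have hu := aux_upper h hh z hz0 hz1 hcot N a
  rw [hlam1] at hu
  have hG := aux_green2 h hh W Wx Wy N
    (fun k => a k / ((π * (k + 1) / h) * sinh (π * (k + 1) / h * h)))
    (fun k => π * (k + 1) / h) cW cWx cWy dWx dWy
  simp_rw [aux_P_end h hh] at hG
  have cP := auxP_cont N (fun k => a k / ((π * (k + 1) / h) * sinh (π * (k + 1) / h * h)))
    (fun k => π * (k + 1) / h)
  have cQ := auxQ_cont N (fun k => a k / ((π * (k + 1) / h) * sinh (π * (k + 1) / h * h)))
    (fun k => π * (k + 1) / h)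
  generalize auxP N (fun k => a k / ((π * (k + 1) / h) * sinh (π * (k + 1) / h * h)))
    (fun k => π * (k + 1) / h) = P at *
  generalize auxQ N (fun k => a k / ((π * (k + 1) / h) * sinh (π * (k + 1) / h * h)))
    (fun k => π * (k + 1) / h) = Q at *
  have hq0 := aux_int_q h hh N a
  have cq : Continuous fun t : ℝ => ∑ k ∈ Finset.range N, a k * cos (π * (k + 1) / h * t) := by
    fun_prop
  obtain ⟨q, hq⟩ : ∃ q : ℝ → ℝ, q = fun t : ℝ =>
    ∑ k ∈ Finset.range N, a k * cos (π * (k + 1) / h * t) := ⟨_, rfl⟩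
  have hqt : ∀ t, ∑ k ∈ Finset.range N, a k * cos (π * (k + 1) / h * t) = q t := by
    intro t; rw [hq]
  simp_rw [hqt] at hap hu hG hq0 cq
  -- Young inequality on the triangle
  have hY : 2 * lam * ∫ p in auxTri h, (Wx p * P p + Wy p * Q p) ≤
      (∫ p in auxTri h, (Wx p ^ 2 + Wy p ^ 2)) + lam ^ 2 * ∫ p in auxTri h, (P p ^ 2 + Q p ^ 2) := by
    rw [← integral_const_mul, ← integral_const_mul, ← integral_add
      (auxTri_int h (fun p => Wx p ^ 2 + Wy p ^ 2) (by fun_prop))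
      (auxTri_int h (fun p => lam ^ 2 * (P p ^ 2 + Q p ^ 2)) (by fun_prop))]
    refine integral_mono
      (auxTri_int h (fun p => 2 * lam * (Wx p * P p + Wy p * Q p)) (by fun_prop))
      (auxTri_int h (fun p => Wx p ^ 2 + Wy p ^ 2 + lam ^ 2 * (P p ^ 2 + Q p ^ 2)) (by fun_prop)) ?_
    intro p
    simp only
    nlinarith [sq_nonneg (Wx p - lam * P p), sq_nonneg (Wy p - lam * Q p)]
  rw [hG] at hY
  have hu2 := mul_le_mul_of_nonneg_left hu (sq_nonneg lam)
  have e3 : lam ^ 2 * (1 / lam * ∫ t in (0 : ℝ)..h, q t ^ 2) = lam * ∫ t in (0 : ℝ)..h, q t ^ 2 := by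
    field_simp
  rw [e3] at hu2
  -- the remainder
  have hR : ∫ t in (0 : ℝ)..h, (W (h, t) - (a0 + q t)) ^ 2 ≤ δ / lam := by
    have : ∫ t in (0 : ℝ)..h, (W (h, t) - (a0 + q t)) ^ 2 ≤ ∫ t in (0 : ℝ)..h, δ / (lam * h) := by
      refine intervalIntegral.integral_mono_on hh.le
        (Continuous.intervalIntegrable (by fun_prop) _ _)
        (Continuous.intervalIntegrable (by fun_prop) _ _) fun t ht => ?_
      have h1 := (hap t ht).le
      have h2 := pow_le_pow_left₀ (abs_nonneg _) h1 2
      rwa [sq_abs, Real.sq_sqrt (by positivity)] at h2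
    refine this.trans (le_of_eq ?_)
    simp
    field_simp
  have hE : ∫ t in (0 : ℝ)..h, (W (h, t) - (a0 + q t)) ^ 2 =
      (∫ t in (0 : ℝ)..h, W (h, t) ^ 2) - 2 * (∫ t in (0 : ℝ)..h, W (h, t) * q t) +
       (∫ t in (0 : ℝ)..h, q t ^ 2) + h * a0 ^ 2 := by
    have i1 : IntervalIntegrable (fun t => W (h, t) ^ 2) volume 0 h :=
      Continuous.intervalIntegrable (by fun_prop) _ _
    have i2 : IntervalIntegrable (fun t => 2 * (W (h, t) * q t)) volume 0 h :=
      Continuous.intervalIntegrable (by fun_prop) _ _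
    have i3 : IntervalIntegrable (fun t => q t ^ 2) volume 0 h :=
      Continuous.intervalIntegrable (by fun_prop) _ _
    have i4 : IntervalIntegrable (fun t => 2 * a0 * W (h, t)) volume 0 h :=
      Continuous.intervalIntegrable (by fun_prop) _ _
    have i5 : IntervalIntegrable (fun t => 2 * a0 * q t) volume 0 h :=
      Continuous.intervalIntegrable (by fun_prop) _ _
    have i6 : IntervalIntegrable (fun t : ℝ => a0 ^ 2) volume 0 h :=
      Continuous.intervalIntegrable (by fun_prop) _ _
    have e : ∀ t, (W (h, t) - (a0 + q t)) ^ 2 = W (h, t) ^ 2 - 2 * (W (h, t) * q t) + q t ^ 2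
        - 2 * a0 * W (h, t) + 2 * a0 * q t + a0 ^ 2 := by intro t; ring
    simp_rw [e]
    rw [intervalIntegral.integral_add ((((i1.sub i2).add i3).sub i4).add i5) i6,
      intervalIntegral.integral_add (((i1.sub i2).add i3).sub i4) i5,
      intervalIntegral.integral_sub ((i1.sub i2).add i3) i4,
      intervalIntegral.integral_add (i1.sub i2) i3,
      intervalIntegral.integral_sub i1 i2]
    simp only [intervalIntegral.integral_const_mul, hmean, hq0]
    simp
  have hR2 := mul_le_mul_of_nonneg_left hR hlam0.le
  have e4 : lam * (δ / lam) = δ := by field_simp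
  rw [e4, hE] at hR2
  have : 0 ≤ lam * (h * a0 ^ 2) := by positivity
  nlinarith

/-- The sharp constant `C₂(Ω,Γ)` in `‖w‖_{L²(Γ)} ≤ C₂ ‖∇w‖_{L²(Ω)}` for functions
with zero mean trace on `Γ`, where `Ω = {0 < x₂ < x₁ < h}` is an isosceles right
triangle and `Γ = {x₁ = h, x₂ ∈ [0,h]}` is one leg, equals
`((ẑ₀/h)·tanh ẑ₀)^(-1/2)`, where `ẑ₀` is the unique root of
`tan z + tanh z = 0` in `(0,π)` (`ẑ₀ ≈ 2.3650`). -/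
theorem triangle_one_leg_C2 (h : ℝ) (hh : 0 < h) (z₀ : ℝ)
    (hz₀ : z₀ ∈ Set.Ioo 0 π ∧ Real.tan z₀ + Real.tanh z₀ = 0)
    (huniq : ∀ z ∈ Set.Ioo (0:ℝ) π, Real.tan z + Real.tanh z = 0 → z = z₀) :
    IsLeast {C : ℝ |
      ∀ w : EuclideanSpace ℝ (Fin 2) → ℝ, ContDiff ℝ 1 w →
        (∫ t in (0:ℝ)..h, w !₂[h, t]) = 0 →
        Real.sqrt (∫ t in (0:ℝ)..h, (w !₂[h, t]) ^ 2) ≤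
          C * Real.sqrt (∫ x in {x : EuclideanSpace ℝ (Fin 2) |
            0 < x 1 ∧ x 1 < x 0 ∧ x 0 < h}, ‖gradient w x‖ ^ 2)}
      (1 / Real.sqrt (z₀ / h * Real.tanh z₀)) := by
  obtain ⟨⟨hz0, hz1⟩, htan⟩ := hz₀
  have hsz : 0 < sinh z₀ := by rw [Real.sinh_pos_iff]; exact hz0
  have hcz := Real.cosh_pos z₀
  have hs : 0 < sin z₀ := Real.sin_pos_of_pos_of_lt_pi hz0 hz1
  rw [Real.tan_eq_sin_div_cos, Real.tanh_eq_sinh_div_cosh] at htan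
  have hc : cos z₀ ≠ 0 := by
    intro h0
    rw [h0] at htan
    simp at htan
    rcases htan with h1 | h1 <;> linarith
  have hrel : sin z₀ * cosh z₀ + sinh z₀ * cos z₀ = 0 := by
    field_simp at htan
    linarith
  have hcot : cos z₀ / sin z₀ = - (cosh z₀ / sinh z₀) := by
    field_simp
    linarith
  have hlam0 : 0 < z₀ / h * tanh z₀ := by rw [Real.tanh_eq_sinh_div_cosh]; positivity
  constructor
  · intro w hw hmean
    obtain ⟨W, Wx, Wy, cW, cWx, cWy, dWx, dWy, hW, hgrad⟩ := aux_transfer h w hw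
    rw [hgrad]
    simp_rw [← hW] at hmean ⊢
    have := aux_main_ineq h hh z₀ hz0 hz1 hcot W Wx Wy cW cWx cWy dWx dWy hmean
    rw [one_div, ← Real.sqrt_inv, ← Real.sqrt_mul (by positivity)]
    apply Real.sqrt_le_sqrt
    rw [inv_mul_eq_div, le_div_iff₀ hlam0]
    linarith
  · intro C hC
    obtain ⟨u, hu⟩ : ∃ u, u = auxPhi 1 (fun _ => 1) (fun _ => z₀ / h) := ⟨_, rfl⟩
    have hzh : z₀ / h * h = z₀ := by field_simp
    have huP : ∀ t, auxP 1 (fun _ => 1) (fun _ => z₀ / h) (h, t) =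
        z₀ / h * tanh z₀ * u (h, t) := by
      intro t
      rw [hu]
      simp only [auxP, auxPhi, Finset.sum_range_one, hzh]
      rw [Real.tanh_eq_sinh_div_cosh]
      field_simp
      linear_combination (-cosh (z₀ * t / h)) * hrel
    have cu : Continuous u := by rw [hu]; exact auxPhi_cont _ _ _
    have hmean : ∫ t in (0 : ℝ)..h, u (h, t) = 0 := by
      have := aux_green2 h hh (fun _ => 1) (fun _ => 0) (fun _ => 0) 1 (fun _ => 1)
        (fun _ => z₀ / h) continuous_const continuous_const continuous_const
        (fun x y => hasDerivAt_const _ _) (fun x y => hasDerivAt_const _ _)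
      simp only [huP, zero_mul, add_zero, integral_zero, one_mul,
        intervalIntegral.integral_const_mul] at this
      have h2 := mul_eq_zero.1 this.symm
      exact h2.resolve_left hlam0.ne'
    have hen := aux_energy h hh 1 (fun _ => 1) (fun _ => z₀ / h)
    rw [← hu] at hen
    simp_rw [huP] at hen
    have e1 : ∀ t, u (h, t) * (z₀ / h * tanh z₀ * u (h, t)) =
      z₀ / h * tanh z₀ * u (h, t) ^ 2 := by intro t; ring
    simp_rw [e1] at hen
    rw [intervalIntegral.integral_const_mul] at hen
    have hpos : 0 < ∫ t in (0 : ℝ)..h, u (h, t) ^ 2 := by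
      refine intervalIntegral.integral_pos hh (by fun_prop) (fun t _ => sq_nonneg _)
        ⟨0, ⟨le_rfl, hh.le⟩, ?_⟩
      have : 0 < u (h, 0) := by
        rw [hu]
        simp only [auxPhi, Finset.sum_range_one, hzh]
        have h1 := Real.one_lt_cosh.2 hz0.ne'
        have h2 := Real.neg_one_le_cos z₀
        simp
        linarith
      positivity
    have hw : ContDiff ℝ 1 (fun x : EuclideanSpace ℝ (Fin 2) => u (x 0, x 1)) := by
      rw [hu]
      simp only [auxPhi, Finset.sum_range_one]
      fun_prop
    have hCu := hC _ hw
    obtain ⟨W, Wx, Wy, cW, cWx, cWy, dWx, dWy, hW, hgrad⟩ := aux_transfer h _ hw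
    have hWu : ∀ x y, W (x, y) = u (x, y) := by
      intro x y; rw [hW]; simp
    have hWx : ∀ p, Wx p = auxP 1 (fun _ => 1) (fun _ => z₀ / h) p := by
      rintro ⟨x, y⟩
      have h1 := dWx x y
      simp_rw [hWu, hu] at h1
      exact h1.unique (auxPhi_dx _ _ _ x y)
    have hWy : ∀ p, Wy p = auxQ 1 (fun _ => 1) (fun _ => z₀ / h) p := by
      rintro ⟨x, y⟩
      have h1 := dWy x y
      simp_rw [hWu, hu] at h1
      exact h1.unique (auxPhi_dy _ _ _ x y)
    rw [hgrad] at hCu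
    simp_rw [hWx, hWy] at hCu
    rw [hen] at hCu
    simp only [PiLp.toLp_apply, Matrix.cons_val_zero, Matrix.cons_val_one] at hCu
    have hfin := hCu hmean
    rw [Real.sqrt_mul hlam0.le] at hfin
    have hI : 0 < sqrt (∫ t in (0 : ℝ)..h, u (h, t) ^ 2) := Real.sqrt_pos.2 hpos
    have hL : 0 < sqrt (z₀ / h * tanh z₀) := Real.sqrt_pos.2 hlam0
    rw [div_le_iff₀ hL]
    by_contra hcon
    push Not at hcon
    nlinarith
end

section
/- Let Ω = {(x₁,x₂) ∈ ℝ² : 0 < x₂ < x₁ < h} be an isosceles right triangle with legs of length h > 0, and let Γ = {x₁ = h, x₂ ∈ [0,h]} ∪ {x₂ = 0, x₁ ∈ [0,h]} be the union of the two legs. Then the sharp constant C₁(Ω,Γ) in the inequality ‖w‖_{L²(Ω)} ≤ C₁‖∇w‖_{L²(Ω)} for all w ∈ H̃¹(Ω,Γ) is equal to h/π. -/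
open MeasureTheory Real

lemma picone_aux (h k p q : ℝ) (hk : 0 < k) (hkh : k * h < π) (hp : 0 ≤ p) (hpq : p ≤ q)
    (hq : q ≤ h) (F f : ℝ → ℝ) (hF : ∀ x, HasDerivAt F (f x) x) (hf : Continuous f) :
    k ^ 2 * ∫ x in p..q, F x ^ 2 ≤ (∫ x in p..q, f x ^ 2)
      + k * tan (k * (q - h / 2)) * F q ^ 2 - k * tan (k * (p - h / 2)) * F p ^ 2 := by
  have hFc : Continuous F := continuous_iff_continuousAt.2 fun x => (hF x).continuousAt
  have hcos : ∀ x ∈ Set.uIcc p q, cos (k * (x - h / 2)) ≠ 0 := by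
    intro x hx
    rw [Set.uIcc_of_le hpq] at hx
    apply ne_of_gt
    apply cos_pos_of_mem_Ioo
    constructor <;> nlinarith [hx.1, hx.2]
  have hd : ∀ x ∈ Set.uIcc p q, HasDerivAt (fun x => k * tan (k * (x - h / 2)) * F x ^ 2)
      ((f x + k * tan (k * (x - h / 2)) * F x) ^ 2 - f x ^ 2 + k ^ 2 * F x ^ 2) x := by
    intro x hx
    have h1 : HasDerivAt (fun x : ℝ => k * (x - h / 2)) k x := by
      simpa using ((hasDerivAt_id x).sub_const (h / 2)).const_mul k
    have h2 := ((((hasDerivAt_tan (hcos x hx)).comp x h1).const_mul k).mul ((hF x).pow 2))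
    refine HasDerivAt.congr_deriv h2 ?_
    have hc := hcos x hx
    have h3 : 1 / cos (k * (x - h / 2)) ^ 2 = 1 + tan (k * (x - h / 2)) ^ 2 := by
      have hsc := sin_sq_add_cos_sq (k * (x - h / 2))
      rw [tan_eq_sin_div_cos]
      generalize cos (k * (x - h / 2)) = C at *
      generalize sin (k * (x - h / 2)) = S at *
      field_simp
      linarith
    rw [h3]
    simp only [Function.comp, Pi.pow_apply]
    push_cast
    ring
  have htan : ContinuousOn (fun x => tan (k * (x - h / 2))) (Set.uIcc p q) := by
    intro x hx
    exact ((continuousAt_tan.2 (hcos x hx)).comp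
      (f := fun x : ℝ => k * (x - h / 2)) (by fun_prop)).continuousWithinAt
  have c1 : ContinuousOn (fun x => (f x + k * tan (k * (x - h / 2)) * F x) ^ 2) (Set.uIcc p q) := by
    have := hf.continuousOn (s := Set.uIcc p q)
    have := hFc.continuousOn (s := Set.uIcc p q)
    fun_prop
  have i1 := c1.intervalIntegrable (μ := volume)
  have i2 : IntervalIntegrable (fun x => f x ^ 2) volume p q := (hf.pow 2).intervalIntegrable _ _
  have i3 : IntervalIntegrable (fun x => k ^ 2 * F x ^ 2) volume p q :=
    (by fun_prop : Continuous fun x => k ^ 2 * F x ^ 2).intervalIntegrable _ _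
  have key := intervalIntegral.integral_eq_sub_of_hasDerivAt hd ((i1.sub i2).add i3)
  rw [intervalIntegral.integral_add (i1.sub i2) i3, intervalIntegral.integral_sub i1 i2,
    intervalIntegral.integral_const_mul] at key
  have nn : 0 ≤ ∫ x in p..q, (f x + k * tan (k * (x - h / 2)) * F x) ^ 2 :=
    intervalIntegral.integral_nonneg hpq fun x _ => sq_nonneg _
  linarith

lemma dirichlet_aux (h a : ℝ) (hh : 0 < h) (ha : 0 ≤ a) (hah : a ≤ h) (F₁ F₂ f₁ f₂ : ℝ → ℝ)
    (hF₁ : ∀ x, HasDerivAt F₁ (f₁ x) x) (hF₂ : ∀ x, HasDerivAt F₂ (f₂ x) x)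
    (hf₁ : Continuous f₁) (hf₂ : Continuous f₂) (h0 : F₁ 0 = 0) (h1 : F₁ a = F₂ a)
    (h2 : F₂ h = 0) :
    (π / h) ^ 2 * ((∫ x in (0:ℝ)..a, F₁ x ^ 2) + ∫ x in a..h, F₂ x ^ 2) ≤
      (∫ x in (0:ℝ)..a, f₁ x ^ 2) + ∫ x in a..h, f₂ x ^ 2 := by
  have hk : 0 < π / h := div_pos pi_pos hh
  have ev : ∀ k ∈ Set.Ioo 0 (π / h),
      k ^ 2 * ((∫ x in (0:ℝ)..a, F₁ x ^ 2) + ∫ x in a..h, F₂ x ^ 2) ≤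
      (∫ x in (0:ℝ)..a, f₁ x ^ 2) + ∫ x in a..h, f₂ x ^ 2 := by
    intro k hk'
    have hkh : k * h < π := (lt_div_iff₀ hh).1 hk'.2
    have e1 := picone_aux h k 0 a hk'.1 hkh le_rfl ha hah F₁ f₁ hF₁ hf₁
    have e2 := picone_aux h k a h hk'.1 hkh ha hah le_rfl F₂ f₂ hF₂ hf₂
    rw [h0, h1] at e1
    rw [h2] at e2
    simp at e1 e2
    linarith
  have lim : Filter.Tendsto (fun k : ℝ => k ^ 2 * ((∫ x in (0:ℝ)..a, F₁ x ^ 2) + ∫ x in a..h, F₂ x ^ 2))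
      (nhdsWithin (π / h) (Set.Iio (π / h)))
      (nhds ((π / h) ^ 2 * ((∫ x in (0:ℝ)..a, F₁ x ^ 2) + ∫ x in a..h, F₂ x ^ 2))) :=
    ((by fun_prop : Continuous (fun k : ℝ => k ^ 2 * ((∫ x in (0:ℝ)..a, F₁ x ^ 2) + ∫ x in a..h, F₂ x ^ 2))).tendsto _).mono_left nhdsWithin_le_nhds
  refine le_of_tendsto lim ?_
  filter_upwards [Ioo_mem_nhdsLT hk] with k hk using ev k hk

lemma zero_mean_aux (h a : ℝ) (hh : 0 < h) (ha : 0 ≤ a) (hah : a ≤ h) (f₁ f₂ g₁ g₂ : ℝ → ℝ)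
    (hf₁ : ∀ x, HasDerivAt f₁ (g₁ x) x) (hf₂ : ∀ x, HasDerivAt f₂ (g₂ x) x)
    (hg₁ : Continuous g₁) (hg₂ : Continuous g₂) (h1 : f₁ a = f₂ a)
    (h2 : (∫ x in (0:ℝ)..a, f₁ x) + ∫ x in a..h, f₂ x = 0) :
    (π / h) ^ 2 * ((∫ x in (0:ℝ)..a, f₁ x ^ 2) + ∫ x in a..h, f₂ x ^ 2) ≤
      (∫ x in (0:ℝ)..a, g₁ x ^ 2) + ∫ x in a..h, g₂ x ^ 2 := by
  have hc₁ : Continuous f₁ := continuous_iff_continuousAt.2 fun x => (hf₁ x).continuousAt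
  have hc₂ : Continuous f₂ := continuous_iff_continuousAt.2 fun x => (hf₂ x).continuousAt
  obtain ⟨F₁, hF₁, hF10⟩ : ∃ F : ℝ → ℝ, (∀ x, HasDerivAt F (f₁ x) x) ∧ F 0 = 0 :=
    ⟨fun x => ∫ t in (0:ℝ)..x, f₁ t, fun x => intervalIntegral.integral_hasDerivAt_right
      (hc₁.intervalIntegrable _ _) hc₁.stronglyMeasurable.stronglyMeasurableAtFilter hc₁.continuousAt, by simp⟩
  obtain ⟨F₂, hF₂, hF20⟩ : ∃ F : ℝ → ℝ, (∀ x, HasDerivAt F (f₂ x) x) ∧ F a = F₁ a :=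
    ⟨fun x => F₁ a + ∫ t in a..x, f₂ t, fun x => (intervalIntegral.integral_hasDerivAt_right
      (hc₂.intervalIntegrable _ _) hc₂.stronglyMeasurable.stronglyMeasurableAtFilter hc₂.continuousAt).const_add _, by simp⟩
  have hFc₁ : Continuous F₁ := continuous_iff_continuousAt.2 fun x => (hF₁ x).continuousAt
  have hFc₂ : Continuous F₂ := continuous_iff_continuousAt.2 fun x => (hF₂ x).continuousAt
  have q1 := intervalIntegral.integral_eq_sub_of_hasDerivAt (a := 0) (b := a) (fun x _ => hF₁ x) (hc₁.intervalIntegrable _ _)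
  have q2 := intervalIntegral.integral_eq_sub_of_hasDerivAt (a := a) (b := h) (fun x _ => hF₂ x) (hc₂.intervalIntegrable _ _)
  have hF2h : F₂ h = 0 := by linarith
  have D := dirichlet_aux h a hh ha hah F₁ F₂ f₁ f₂ hF₁ hF₂ hc₁ hc₂ hF10 hF20.symm hF2h
  set k := π / h
  have P : ∀ (F f g : ℝ → ℝ) (p q : ℝ), p ≤ q → (∀ x, HasDerivAt F (f x) x) → (∀ x, HasDerivAt f (g x) x) →
      Continuous F → Continuous f → Continuous g →
      0 ≤ (∫ x in p..q, g x ^ 2) - 2 * k ^ 2 * (∫ x in p..q, f x ^ 2)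
        + k ^ 4 * (∫ x in p..q, F x ^ 2) + 2 * k ^ 2 * (f q * F q - f p * F p) := by
    intro F f g p q hpq hF hf hFc hfc hgc
    have key := intervalIntegral.integral_eq_sub_of_hasDerivAt (a := p) (b := q)
      (fun x _ => (hf x).mul (hF x)) ((by fun_prop : Continuous fun x => g x * F x + f x * f x).intervalIntegrable _ _)
    have nn : 0 ≤ ∫ x in p..q, (g x + k ^ 2 * F x) ^ 2 :=
      intervalIntegral.integral_nonneg hpq fun x _ => sq_nonneg _
    have e : (∫ x in p..q, (g x + k ^ 2 * F x) ^ 2) = (∫ x in p..q, g x ^ 2) - 2 * k ^ 2 * (∫ x in p..q, f x ^ 2)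
        + k ^ 4 * (∫ x in p..q, F x ^ 2) + 2 * k ^ 2 * (∫ x in p..q, (g x * F x + f x * f x)) := by
      simp only [← intervalIntegral.integral_const_mul]
      rw [← intervalIntegral.integral_sub, ← intervalIntegral.integral_add, ← intervalIntegral.integral_add]
      · congr 1; ext x; ring
      all_goals (apply Continuous.intervalIntegrable; fun_prop)
    rw [key] at e
    simp only [Pi.mul_apply] at e
    linarith
  have P1 := P F₁ f₁ g₁ 0 a ha hF₁ hf₁ hFc₁ hc₁ hg₁
  have P2 := P F₂ f₂ g₂ a h hah hF₂ hf₂ hFc₂ hc₂ hg₂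
  rw [hF10] at P1
  rw [hF20, hF2h, ← h1] at P2
  have D' := mul_le_mul_of_nonneg_left D (sq_nonneg k)
  nlinarith

lemma mean_aux (h a : ℝ) (hh : 0 < h) (ha : 0 ≤ a) (hah : a ≤ h) (f₁ f₂ g₁ g₂ : ℝ → ℝ)
    (hf₁ : ∀ x, HasDerivAt f₁ (g₁ x) x) (hf₂ : ∀ x, HasDerivAt f₂ (g₂ x) x)
    (hg₁ : Continuous g₁) (hg₂ : Continuous g₂) (h1 : f₁ a = f₂ a) :
    (π / h) ^ 2 * ((∫ x in (0:ℝ)..a, f₁ x ^ 2) + ∫ x in a..h, f₂ x ^ 2) ≤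
      ((∫ x in (0:ℝ)..a, g₁ x ^ 2) + ∫ x in a..h, g₂ x ^ 2)
      + (π / h) ^ 2 / h * ((∫ x in (0:ℝ)..a, f₁ x) + ∫ x in a..h, f₂ x) ^ 2 := by
  have hc₁ : Continuous f₁ := continuous_iff_continuousAt.2 fun x => (hf₁ x).continuousAt
  have hc₂ : Continuous f₂ := continuous_iff_continuousAt.2 fun x => (hf₂ x).continuousAt
  set M := (∫ x in (0:ℝ)..a, f₁ x) + ∫ x in a..h, f₂ x with hM
  have E : ∀ (f : ℝ → ℝ) (p q : ℝ), Continuous f →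
      (∫ x in p..q, (f x - M / h)) = (∫ x in p..q, f x) - (q - p) * (M / h) ∧
      (∫ x in p..q, (f x - M / h) ^ 2) = (∫ x in p..q, f x ^ 2) - 2 * (M / h) * (∫ x in p..q, f x)
        + (q - p) * (M / h) ^ 2 := by
    intro f p q hf
    constructor
    · rw [intervalIntegral.integral_sub (hf.intervalIntegrable _ _) (by simp)]
      simp
      ring
    · have : (∫ x in p..q, (M / h) ^ 2) = (q - p) * (M / h) ^ 2 := by simp
      rw [← this, ← intervalIntegral.integral_const_mul, ← intervalIntegral.integral_sub, ← intervalIntegral.integral_add]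
      · congr 1; ext x; ring
      all_goals (apply Continuous.intervalIntegrable; fun_prop)
  have Z := zero_mean_aux h a hh ha hah (fun x => f₁ x - M / h) (fun x => f₂ x - M / h) g₁ g₂
    (fun x => (hf₁ x).sub_const _) (fun x => (hf₂ x).sub_const _) hg₁ hg₂ (by simp [h1])
    (by
      rw [(E f₁ 0 a hc₁).1, (E f₂ a h hc₂).1]
      have : h * (M / h) = M := by field_simp
      linarith)
  simp only [(E f₁ 0 a hc₁).2, (E f₂ a h hc₂).2] at Z
  have e : (∫ x in (0:ℝ)..a, f₁ x ^ 2) - 2 * (M / h) * (∫ x in (0:ℝ)..a, f₁ x) + (a - 0) * (M / h) ^ 2 +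
    ((∫ x in a..h, f₂ x ^ 2) - 2 * (M / h) * (∫ x in a..h, f₂ x) + (h - a) * (M / h) ^ 2)
     = (∫ x in (0:ℝ)..a, f₁ x ^ 2) + (∫ x in a..h, f₂ x ^ 2) - M ^ 2 / h := by
    have : 2 * (M / h) * (∫ x in (0:ℝ)..a, f₁ x) + 2 * (M / h) * (∫ x in a..h, f₂ x) = 2 * (M / h) * M := by
      rw [hM]; ring
    have h3 : 2 * (M / h) * M - h * (M / h) ^ 2 = M ^ 2 / h := by field_simp; ring
    linarith
  rw [e] at Z
  have : (π / h) ^ 2 / h * M ^ 2 = (π / h) ^ 2 * (M ^ 2 / h) := by ring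
  rw [this]
  linarith

lemma antiper_aux (h : ℝ) (hh : 0 < h) (m P : ℝ → ℝ) (hm : ∀ x, HasDerivAt m (P x) x)
    (hP : Continuous P) (h0 : m 0 + m h = 0) :
    (π / h) ^ 2 * (∫ x in (0:ℝ)..h, m x ^ 2) ≤ ∫ x in (0:ℝ)..h, P x ^ 2 := by
  have hmc : Continuous m := continuous_iff_continuousAt.2 fun x => (hm x).continuousAt
  set k := π / h with hk
  have hk0 : 0 < k := div_pos pi_pos hh
  have hkh : k * h = π := by rw [hk]; field_simp
  have hs : ∀ x, HasDerivAt (fun x => sin (k * x)) (k * cos (k * x)) x := by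
    intro x
    have := ((hasDerivAt_id x).const_mul k).sin
    simpa [mul_comm] using this
  have hc : ∀ x, HasDerivAt (fun x => cos (k * x)) (-(k * sin (k * x))) x := by
    intro x
    have := ((hasDerivAt_id x).const_mul k).cos
    simpa [mul_comm] using this
  have is : (∫ x in (0:ℝ)..h, sin (k * x)) = 2 / k := by
    have := intervalIntegral.integral_eq_sub_of_hasDerivAt (a := 0) (b := h) (fun x _ => hc x)
      (by apply Continuous.intervalIntegrable; fun_prop)
    rw [intervalIntegral.integral_neg, intervalIntegral.integral_const_mul, hkh] at this
    simp only [mul_zero, cos_zero, cos_pi] at this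
    field_simp
    linarith
  obtain ⟨t, ht⟩ : ∃ t : ℝ, (∫ x in (0:ℝ)..h, m x) + t * (2 / k) = 0 :=
    ⟨-(∫ x in (0:ℝ)..h, m x) * (k / 2), by field_simp; ring⟩
  have Z := zero_mean_aux h h hh hh.le le_rfl (fun x => m x + t * sin (k * x)) (fun x => m x + t * sin (k * x))
    (fun x => P x + t * (k * cos (k * x))) (fun x => P x + t * (k * cos (k * x)))
    (fun x => (hm x).add ((hs x).const_mul t)) (fun x => (hm x).add ((hs x).const_mul t))
    (by fun_prop) (by fun_prop) rfl (by
      rw [intervalIntegral.integral_same, add_zero, intervalIntegral.integral_add, intervalIntegral.integral_const_mul, is, ht]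
      all_goals (apply Continuous.intervalIntegrable; fun_prop))
  simp only [intervalIntegral.integral_same, add_zero] at Z
  rw [← hk] at Z
  have key := intervalIntegral.integral_eq_sub_of_hasDerivAt (a := 0) (b := h)
    (fun x _ => (((hm x).mul (hc x)).const_mul (2 * t * k)).add (((hs x).mul (hc x)).const_mul (t ^ 2 * k)))
    (by apply Continuous.intervalIntegrable; fun_prop)
  simp only [Pi.add_apply, Pi.mul_apply, hkh, mul_zero, cos_zero, sin_zero, cos_pi, sin_pi] at key
  have e : (∫ x in (0:ℝ)..h, (P x + t * (k * cos (k * x))) ^ 2) - k ^ 2 * (∫ x in (0:ℝ)..h, (m x + t * sin (k * x)) ^ 2)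
     = (∫ x in (0:ℝ)..h, P x ^ 2) - k ^ 2 * (∫ x in (0:ℝ)..h, m x ^ 2) + (∫ x in (0:ℝ)..h, (2 * t * k * (P x * cos (k * x) + m x * -(k * sin (k * x))) +
          t ^ 2 * k * (k * cos (k * x) * cos (k * x) + sin (k * x) * -(k * sin (k * x))))) := by
    simp only [← intervalIntegral.integral_const_mul]
    rw [← intervalIntegral.integral_sub, ← intervalIntegral.integral_sub, ← intervalIntegral.integral_add]
    · congr 1; ext x; ring
    all_goals (apply Continuous.intervalIntegrable; fun_prop)
  rw [key] at e
  have : 2 * t * k * (m h * -1) - 2 * t * k * (m 0 * 1) = 0 := by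
    linear_combination (-2 * t * k) * h0
  nlinarith

lemma cs_aux (h a : ℝ) (hh : 0 < h) (ha : 0 ≤ a) (hah : a ≤ h) (f₁ f₂ : ℝ → ℝ)
    (hc₁ : Continuous f₁) (hc₂ : Continuous f₂) :
    ((∫ x in (0:ℝ)..a, f₁ x) + ∫ x in a..h, f₂ x) ^ 2 ≤
      h * ((∫ x in (0:ℝ)..a, f₁ x ^ 2) + ∫ x in a..h, f₂ x ^ 2) := by
  set M := (∫ x in (0:ℝ)..a, f₁ x) + ∫ x in a..h, f₂ x with hM
  have E : ∀ (f : ℝ → ℝ) (p q : ℝ), p ≤ q → Continuous f →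
      0 ≤ (∫ x in p..q, f x ^ 2) - 2 * (M / h) * (∫ x in p..q, f x)
        + (q - p) * (M / h) ^ 2 := by
    intro f p q hpq hf
    have : (∫ x in p..q, (M / h) ^ 2) = (q - p) * (M / h) ^ 2 := by simp
    have e : (∫ x in p..q, (f x - M / h) ^ 2) = (∫ x in p..q, f x ^ 2) - 2 * (M / h) * (∫ x in p..q, f x)
        + (q - p) * (M / h) ^ 2 := by
      rw [← this, ← intervalIntegral.integral_const_mul, ← intervalIntegral.integral_sub, ← intervalIntegral.integral_add]
      · congr 1; ext x; ring
      all_goals (apply Continuous.intervalIntegrable; fun_prop)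
    rw [← e]
    exact intervalIntegral.integral_nonneg hpq fun x _ => sq_nonneg _
  have e1 := E f₁ 0 a ha hc₁
  have e2 := E f₂ a h hah hc₂
  have e3 : 0 ≤ (∫ x in (0:ℝ)..a, f₁ x ^ 2) + (∫ x in a..h, f₂ x ^ 2) - M ^ 2 / h := by
    have : 2 * (M / h) * (∫ x in (0:ℝ)..a, f₁ x) + 2 * (M / h) * (∫ x in a..h, f₂ x) = 2 * (M / h) * M := by
      rw [hM]; ring
    have h3 : 2 * (M / h) * M - h * (M / h) ^ 2 = M ^ 2 / h := by field_simp; ring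
    linarith
  have := mul_nonneg hh.le e3
  have h4 : h * (M ^ 2 / h) = M ^ 2 := by field_simp
  nlinarith

/-- the triangle in the product space -/
def triSet (h : ℝ) : Set (ℝ × ℝ) := {p | 0 < p.2 ∧ p.2 < p.1 ∧ p.1 < h}

lemma triSet_meas (h : ℝ) : MeasurableSet (triSet h) := by
  have : IsOpen (triSet h) := by
    unfold triSet
    refine (isOpen_lt continuous_const continuous_snd).inter
      ((isOpen_lt continuous_snd continuous_fst).inter (isOpen_lt continuous_fst continuous_const))
  exact this.measurableSet

lemma triSet_int (h : ℝ) (φ : ℝ × ℝ → ℝ) (hφ : Continuous φ) :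
    IntegrableOn φ (triSet h) := by
  refine (hφ.continuousOn.integrableOn_compact (isCompact_Icc (a := ((0:ℝ),(0:ℝ))) (b := (h,h)))).mono_set ?_
  rintro ⟨x, y⟩ ⟨h1, h2, h3⟩
  simp only at h1 h2 h3
  constructor <;> constructor <;> simp <;> linarith

lemma tri_a (h : ℝ) (hh : 0 ≤ h) (φ : ℝ × ℝ → ℝ) (hφ : Continuous φ) :
    ∫ p in triSet h, φ p = ∫ x in (0:ℝ)..h, ∫ y in (0:ℝ)..x, φ (x, y) := by
  have hi := (integrable_indicator_iff (triSet_meas h)).2 (triSet_int h φ hφ)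
  rw [← integral_indicator (triSet_meas h)]
  rw [Measure.volume_eq_prod] at hi ⊢
  rw [integral_prod _ hi, intervalIntegral.integral_of_le hh, integral_Ioc_eq_integral_Ioo,
    ← integral_indicator measurableSet_Ioo]
  congr 1
  ext x
  by_cases hx : x ∈ Set.Ioo 0 h
  · rw [Set.indicator_of_mem hx, intervalIntegral.integral_of_le hx.1.le, integral_Ioc_eq_integral_Ioo,
      ← integral_indicator measurableSet_Ioo]
    congr 1
    ext y
    have hx2 := hx.2
    simp [Set.indicator_apply, triSet, hx2]
  · rw [Set.indicator_of_notMem hx]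
    have : ∀ y, (triSet h).indicator φ (x, y) = 0 := by
      intro y
      refine Set.indicator_of_notMem ?_ _
      rintro ⟨h1, h2, h3⟩
      exact hx ⟨h1.trans h2, h3⟩
    simp [this]

lemma tri_b (h : ℝ) (hh : 0 ≤ h) (φ : ℝ × ℝ → ℝ) (hφ : Continuous φ) :
    ∫ p in triSet h, φ p = ∫ y in (0:ℝ)..h, ∫ x in y..h, φ (x, y) := by
  have hi := (integrable_indicator_iff (triSet_meas h)).2 (triSet_int h φ hφ)
  rw [← integral_indicator (triSet_meas h)]
  rw [Measure.volume_eq_prod] at hi ⊢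
  rw [integral_prod_symm _ hi, intervalIntegral.integral_of_le hh, integral_Ioc_eq_integral_Ioo,
    ← integral_indicator measurableSet_Ioo]
  congr 1
  ext y
  by_cases hy : y ∈ Set.Ioo 0 h
  · rw [Set.indicator_of_mem hy, intervalIntegral.integral_of_le hy.2.le, integral_Ioc_eq_integral_Ioo,
      ← integral_indicator measurableSet_Ioo]
    congr 1
    ext x
    have hy1 := hy.1
    simp [Set.indicator_apply, triSet, hy1]
  · rw [Set.indicator_of_notMem hy]
    have : ∀ x, (triSet h).indicator φ (x, y) = 0 := by
      intro x
      refine Set.indicator_of_notMem ?_ _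
      rintro ⟨h1, h2, h3⟩
      exact hy ⟨h1, h2.trans h3⟩
    simp [this]

lemma tri_eucl (h : ℝ) (ψ : EuclideanSpace ℝ (Fin 2) → ℝ) :
    ∫ x in {x : EuclideanSpace ℝ (Fin 2) | 0 < x 1 ∧ x 1 < x 0 ∧ x 0 < h}, ψ x
      = ∫ p in triSet h, ψ !₂[p.1, p.2] := by
  have h1 := (EuclideanSpace.volume_preserving_symm_measurableEquiv_toLp (Fin 2)).trans
    (volume_preserving_finTwoArrow ℝ)
  have e := h1.setIntegral_preimage_emb (MeasurableEquiv.measurableEmbedding _)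
    (fun p : ℝ × ℝ => ψ !₂[p.1, p.2]) (triSet h)
  rw [← e]
  have hs : ⇑((MeasurableEquiv.toLp 2 (Fin 2 → ℝ)).symm.trans MeasurableEquiv.finTwoArrow) ⁻¹' triSet h
      = {x : EuclideanSpace ℝ (Fin 2) | 0 < x 1 ∧ x 1 < x 0 ∧ x 0 < h} := rfl
  have hx : ∀ x : EuclideanSpace ℝ (Fin 2),
      !₂[(((MeasurableEquiv.toLp 2 (Fin 2 → ℝ)).symm.trans MeasurableEquiv.finTwoArrow) x).1,
          (((MeasurableEquiv.toLp 2 (Fin 2 → ℝ)).symm.trans MeasurableEquiv.finTwoArrow) x).2] = x := by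
    intro x
    ext i
    fin_cases i <;> rfl
  rw [hs]
  congr 1
  ext x
  rw [hx x]

lemma P_cont (h : ℝ) (a b : ℝ → ℝ → ℝ) (ha : Continuous (Function.uncurry a)) (hb : Continuous (Function.uncurry b)) :
    Continuous fun x => (∫ y in (0:ℝ)..x, a x y) + ∫ y in x..h, b y x := by
  have h1 : Continuous fun x => ∫ y in (0:ℝ)..x, a x y :=
    intervalIntegral.continuous_parametric_intervalIntegral_of_continuous ha continuous_id
  have hb' : Continuous (Function.uncurry fun x y => b y x) := hb.comp continuous_swap
  have h2 : Continuous fun x => ∫ y in h..x, b y x :=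
    intervalIntegral.continuous_parametric_intervalIntegral_of_continuous hb' continuous_id
  have : (fun x => (∫ y in (0:ℝ)..x, a x y) + ∫ y in x..h, b y x) =
    fun x => (∫ y in (0:ℝ)..x, a x y) - ∫ y in h..x, b y x := by
    ext x; rw [intervalIntegral.integral_symm h x]; ring
  rw [this]
  exact h1.sub h2

lemma M_eq (h X : ℝ) (hX : 0 ≤ X) (_hXh : X ≤ h) (u u₁ u₂ : ℝ → ℝ → ℝ)
    (hu : Continuous (Function.uncurry u))
    (h1 : Continuous (Function.uncurry u₁)) (h2 : Continuous (Function.uncurry u₂))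
    (d1 : ∀ x y, HasDerivAt (fun x => u x y) (u₁ x y) x)
    (d2 : ∀ x y, HasDerivAt (fun y => u x y) (u₂ x y) y) :
    (∫ y in (0:ℝ)..h, u y 0) + (∫ x in (0:ℝ)..X, ((∫ y in (0:ℝ)..x, u₁ x y) + ∫ y in x..h, u₂ y x)) =
      (∫ y in (0:ℝ)..X, u X y) + ∫ y in X..h, u y X := by
  have cx : ∀ (v : ℝ → ℝ → ℝ), Continuous (Function.uncurry v) → ∀ y, Continuous fun x => v x y :=
    fun v hv y => hv.comp (by fun_prop : Continuous fun x : ℝ => (x, y))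
  have cy : ∀ (v : ℝ → ℝ → ℝ), Continuous (Function.uncurry v) → ∀ x, Continuous fun y => v x y :=
    fun v hv x => hv.comp (by fun_prop : Continuous fun y : ℝ => (x, y))
  have cd : Continuous fun x => u x x := hu.comp (by fun_prop : Continuous fun y : ℝ => (y, y))
  have f1 : ∀ y a b, (∫ x in a..b, u₁ x y) = u b y - u a y := fun y a b =>
    intervalIntegral.integral_eq_sub_of_hasDerivAt (fun x _ => d1 x y) ((cx u₁ h1 y).intervalIntegrable _ _)
  have f2 : ∀ x a b, (∫ y in a..b, u₂ x y) = u x b - u x a := fun x a b =>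
    intervalIntegral.integral_eq_sub_of_hasDerivAt (fun y _ => d2 x y) ((cy u₂ h2 x).intervalIntegrable _ _)
  have A1 : (∫ x in (0:ℝ)..X, ∫ y in (0:ℝ)..x, u₁ x y) = (∫ y in (0:ℝ)..X, u X y) - ∫ y in (0:ℝ)..X, u y y := by
    have := (tri_a X hX _ h1).symm.trans (tri_b X hX _ h1)
    simp only [Function.uncurry_apply_pair] at this
    rw [this]
    simp only [f1]
    exact intervalIntegral.integral_sub ((cy u hu X).intervalIntegrable _ _) (cd.intervalIntegrable _ _)
  have A2 : (∫ x in (0:ℝ)..X, ∫ y in x..X, u₂ y x) = (∫ y in (0:ℝ)..X, u y y) - ∫ y in (0:ℝ)..X, u y 0 := by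
    have := (tri_b X hX _ h2).symm.trans (tri_a X hX _ h2)
    simp only [Function.uncurry_apply_pair] at this
    rw [this]
    simp only [f2]
    exact intervalIntegral.integral_sub (cd.intervalIntegrable _ _) ((cx u hu 0).intervalIntegrable _ _)
  have A3 : (∫ x in (0:ℝ)..X, ∫ y in X..h, u₂ y x) = (∫ y in X..h, u y X) - ∫ y in X..h, u y 0 := by
    rw [intervalIntegral_intervalIntegral_swap]
    · simp only [f2]
      exact intervalIntegral.integral_sub ((cx u hu X).intervalIntegrable _ _) ((cx u hu 0).intervalIntegrable _ _)
    · refine IntegrableOn.mono_set (t := Set.uIcc 0 X ×ˢ Set.uIcc X h) ?_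
        (Set.prod_mono Set.uIoc_subset_uIcc Set.uIoc_subset_uIcc)
      exact (h2.comp continuous_swap).continuousOn.integrableOn_compact (isCompact_uIcc.prod isCompact_uIcc)
  have c1 : Continuous fun x => ∫ y in (0:ℝ)..x, u₁ x y := 
    intervalIntegral.continuous_parametric_intervalIntegral_of_continuous h1 continuous_id
  have c2 : ∀ b, Continuous fun x => ∫ y in x..b, u₂ y x := by
    intro b
    simpa using P_cont b (fun _ _ => 0) u₂ continuous_const h2
  have c3 : ∀ a b, Continuous fun x => ∫ y in a..b, u₂ y x := by
    intro a b
    exact intervalIntegral.continuous_parametric_intervalIntegral_of_continuous (f := fun x y => u₂ y x) (h2.comp continuous_swap) continuous_const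
  have s : (∫ x in (0:ℝ)..X, ∫ y in x..h, u₂ y x) = (∫ x in (0:ℝ)..X, ∫ y in x..X, u₂ y x) + (∫ x in (0:ℝ)..X, ∫ y in X..h, u₂ y x) := by
    rw [← intervalIntegral.integral_add ((c2 X).intervalIntegrable _ _) ((c3 X h).intervalIntegrable _ _)]
    congr 1; ext x
    rw [intervalIntegral.integral_add_adjacent_intervals] <;> exact (cx u₂ h2 x).intervalIntegrable _ _
  rw [intervalIntegral.integral_add (c1.intervalIntegrable _ _) ((c2 h).intervalIntegrable _ _), A1, s, A2, A3]
  have := intervalIntegral.integral_add_adjacent_intervals ((cx u hu 0).intervalIntegrable (μ := volume) 0 X) ((cx u hu 0).intervalIntegrable (μ := volume) X h)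
  linarith

lemma tri_sum (h : ℝ) (hh : 0 ≤ h) (a b : ℝ → ℝ → ℝ)
    (ha : Continuous (Function.uncurry a)) (hb : Continuous (Function.uncurry b)) :
    (∫ p in triSet h, a p.1 p.2) + (∫ p in triSet h, b p.1 p.2) =
      ∫ x in (0:ℝ)..h, ((∫ y in (0:ℝ)..x, a x y) + ∫ y in x..h, b y x) := by
  have e1 := tri_a h hh _ ha
  have e2 := tri_b h hh _ hb
  simp only [Function.uncurry_def] at e1 e2
  rw [e1, e2, intervalIntegral.integral_add]
  · apply Continuous.intervalIntegrable
    exact intervalIntegral.continuous_parametric_intervalIntegral_of_continuous ha continuous_id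
  · apply Continuous.intervalIntegrable
    simpa using P_cont h (fun _ _ => 0) b continuous_const hb

lemma core (h : ℝ) (hh : 0 < h) (u u₁ u₂ : ℝ → ℝ → ℝ)
    (hu : Continuous (Function.uncurry u))
    (h1 : Continuous (Function.uncurry u₁)) (h2 : Continuous (Function.uncurry u₂))
    (d1 : ∀ x y, HasDerivAt (fun x => u x y) (u₁ x y) x)
    (d2 : ∀ x y, HasDerivAt (fun y => u x y) (u₂ x y) y)
    (h0 : (∫ t in (0:ℝ)..h, u h t) + (∫ s in (0:ℝ)..h, u s 0) = 0) :
    (π / h) ^ 2 * (∫ p in triSet h, u p.1 p.2 ^ 2) ≤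
      (∫ p in triSet h, u₁ p.1 p.2 ^ 2) + ∫ p in triSet h, u₂ p.1 p.2 ^ 2 := by
  have cx : ∀ (v : ℝ → ℝ → ℝ), Continuous (Function.uncurry v) → ∀ y, Continuous fun x => v x y :=
    fun v hv y => hv.comp (by fun_prop : Continuous fun x : ℝ => (x, y))
  have cy : ∀ (v : ℝ → ℝ → ℝ), Continuous (Function.uncurry v) → ∀ x, Continuous fun y => v x y :=
    fun v hv x => hv.comp (by fun_prop : Continuous fun y : ℝ => (x, y))
  have sq : ∀ (v : ℝ → ℝ → ℝ), Continuous (Function.uncurry v) →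
      Continuous (Function.uncurry fun x y => v x y ^ 2) := fun v hv => hv.pow 2
  have S0 := tri_sum h hh.le _ _ (sq u hu) (sq u hu)
  have S1 := tri_sum h hh.le _ _ (sq u₂ h2) (sq u₁ h1)
  have S2 := tri_sum h hh.le _ _ (sq u₁ h1) (sq u₂ h2)
  have C0 := P_cont h _ _ (sq u hu) (sq u hu)
  have C1 := P_cont h _ _ (sq u₂ h2) (sq u₁ h1)
  have C2 := P_cont h _ _ (sq u₁ h1) (sq u₂ h2)
  have CM := P_cont h _ _ hu hu
  have CP := P_cont h _ _ h1 h2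
  set D := (∫ p in triSet h, u₁ p.1 p.2 ^ 2) + ∫ p in triSet h, u₂ p.1 p.2 ^ 2 with hD
  set M : ℝ → ℝ := fun x => (∫ y in (0:ℝ)..x, u x y) + ∫ y in x..h, u y x with hM
  set P : ℝ → ℝ := fun x => (∫ y in (0:ℝ)..x, u₁ x y) + ∫ y in x..h, u₂ y x with hP
  -- step 1
  have st1 : (π / h) ^ 2 * (2 * ∫ p in triSet h, u p.1 p.2 ^ 2) ≤ D + (π / h) ^ 2 / h * ∫ x in (0:ℝ)..h, M x ^ 2 := by
    have eD : D = ∫ x in (0:ℝ)..h, ((∫ y in (0:ℝ)..x, u₂ x y ^ 2) + ∫ y in x..h, u₁ y x ^ 2) := by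
      rw [← S1, hD, add_comm]
    have e2 : (2 * ∫ p in triSet h, u p.1 p.2 ^ 2) = ∫ x in (0:ℝ)..h, ((∫ y in (0:ℝ)..x, u x y ^ 2) + ∫ y in x..h, u y x ^ 2) := by
      rw [← S0, two_mul]
    have CM2 : Continuous fun x => (π / h) ^ 2 / h * M x ^ 2 := by fun_prop
    rw [eD, e2, ← intervalIntegral.integral_const_mul, ← intervalIntegral.integral_const_mul,
      ← intervalIntegral.integral_add (C1.intervalIntegrable _ _) (CM2.intervalIntegrable _ _)]
    apply intervalIntegral.integral_mono_on hh.le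
    · exact (continuous_const.mul C0).intervalIntegrable _ _
    · exact (C1.add (continuous_const.mul (CM.pow 2))).intervalIntegrable _ _
    · intro x hx
      exact mean_aux h x hh hx.1 hx.2 (fun y => u x y) (fun y => u y x) (fun y => u₂ x y) (fun y => u₁ y x)
        (fun y => d2 x y) (fun y => d1 y x) (cy u₂ h2 x) (cx u₁ h1 x) rfl
  -- step 2
  have st2 : (π / h) ^ 2 * (∫ x in (0:ℝ)..h, M x ^ 2) ≤ ∫ x in (0:ℝ)..h, P x ^ 2 := by
    have A := antiper_aux h hh (fun X => (∫ y in (0:ℝ)..h, u y 0) + ∫ x in (0:ℝ)..X, P x) P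
      (fun x => (intervalIntegral.integral_hasDerivAt_right
        (CP.intervalIntegrable _ _) CP.stronglyMeasurable.stronglyMeasurableAtFilter CP.continuousAt).const_add _) CP
      (by
        have e := M_eq h h hh.le le_rfl u u₁ u₂ hu h1 h2 d1 d2
        rw [intervalIntegral.integral_same (a := h)] at e
        simp only [intervalIntegral.integral_same (a := (0:ℝ))]
        linarith)
    have : (∫ x in (0:ℝ)..h, M x ^ 2) = ∫ x in (0:ℝ)..h, ((∫ y in (0:ℝ)..h, u y 0) + ∫ t in (0:ℝ)..x, P t) ^ 2 := by
      apply intervalIntegral.integral_congr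
      intro x hx
      rw [Set.uIcc_of_le hh.le] at hx
      have e := M_eq h x hx.1 hx.2 u u₁ u₂ hu h1 h2 d1 d2
      simp only [hM, hP]
      rw [e]
    rw [this]
    exact A
  have st3 : (∫ x in (0:ℝ)..h, P x ^ 2) ≤ h * D := by
    rw [S2, ← intervalIntegral.integral_const_mul]
    apply intervalIntegral.integral_mono_on hh.le
    · exact (CP.pow 2).intervalIntegrable _ _
    · exact (continuous_const.mul C2).intervalIntegrable _ _
    · intro x hx
      exact cs_aux h x hh hx.1 hx.2 (fun y => u₁ x y) (fun y => u₂ y x) (cy u₁ h1 x) (cx u₂ h2 x)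
  have st4 : (π / h) ^ 2 / h * (∫ x in (0:ℝ)..h, M x ^ 2) ≤ D := by
    rw [div_mul_eq_mul_div, div_le_iff₀ hh]
    linarith
  linarith

lemma grad_sq (w : EuclideanSpace ℝ (Fin 2) → ℝ) (x : EuclideanSpace ℝ (Fin 2)) :
    ‖gradient w x‖ ^ 2 = (fderiv ℝ w x (EuclideanSpace.single 0 1)) ^ 2
      + (fderiv ℝ w x (EuclideanSpace.single 1 1)) ^ 2 := by
  rw [EuclideanSpace.norm_sq_eq, Fin.sum_univ_two, ← inner_gradient_left, ← inner_gradient_left,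
    EuclideanSpace.inner_single_right, EuclideanSpace.inner_single_right]
  simp

lemma hasDerivAt_toLp_aux (f : ℝ → Fin 2 → ℝ) (f' : EuclideanSpace ℝ (Fin 2)) (x : ℝ)
    (hf : ∀ i, HasDerivAt (fun t => f t i) (f' i) x) :
    HasDerivAt (fun t => (WithLp.toLp 2 (f t) : EuclideanSpace ℝ (Fin 2))) f' x := by
  have h1 : HasDerivAt f (WithLp.ofLp f') x := hasDerivAt_pi.2 hf
  exact ((PiLp.continuousLinearEquiv 2 ℝ (fun _ : Fin 2 => ℝ)).symm.toContinuousLinearMap.hasFDerivAt).comp_hasDerivAt x h1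

lemma bridge (h : ℝ) (w : EuclideanSpace ℝ (Fin 2) → ℝ) (hw : ContDiff ℝ 1 w) :
    ∃ u₁ u₂ : ℝ → ℝ → ℝ, Continuous (Function.uncurry u₁) ∧ Continuous (Function.uncurry u₂) ∧
      (∀ x y, HasDerivAt (fun x => w !₂[x, y]) (u₁ x y) x) ∧
      (∀ x y, HasDerivAt (fun y => w !₂[x, y]) (u₂ x y) y) ∧
      Continuous (Function.uncurry fun x y => w !₂[x, y]) ∧
      ∫ x in {x : EuclideanSpace ℝ (Fin 2) | 0 < x 1 ∧ x 1 < x 0 ∧ x 0 < h}, ‖gradient w x‖ ^ 2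
        = (∫ p in triSet h, u₁ p.1 p.2 ^ 2) + ∫ p in triSet h, u₂ p.1 p.2 ^ 2 := by
  have hpc : Continuous fun p : ℝ × ℝ => (!₂[p.1, p.2] : EuclideanSpace ℝ (Fin 2)) := by fun_prop
  have hfd : Continuous (fderiv ℝ w) := hw.continuous_fderiv (by norm_num)
  have hdw : ∀ x, HasFDerivAt w (fderiv ℝ w x) x := fun x => (hw.differentiable (by norm_num) x).hasFDerivAt
  have c : ∀ v, Continuous fun p : ℝ × ℝ => fderiv ℝ w !₂[p.1, p.2] v := fun v =>
    (hfd.comp hpc).clm_apply continuous_const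
  refine ⟨fun x y => fderiv ℝ w !₂[x, y] (EuclideanSpace.single 0 1),
    fun x y => fderiv ℝ w !₂[x, y] (EuclideanSpace.single 1 1), c _, c _, ?_, ?_, hw.continuous.comp hpc, ?_⟩
  · intro x y
    refine (hdw _).comp_hasDerivAt (f := fun x : ℝ => (!₂[x, y] : EuclideanSpace ℝ (Fin 2))) x ?_
    refine hasDerivAt_toLp_aux _ _ _ ?_
    intro i
    fin_cases i
    · simpa using hasDerivAt_id' x
    · simpa using hasDerivAt_const x y
  · intro x y
    refine (hdw _).comp_hasDerivAt (f := fun y : ℝ => (!₂[x, y] : EuclideanSpace ℝ (Fin 2))) y ?_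
    refine hasDerivAt_toLp_aux _ _ _ ?_
    intro i
    fin_cases i
    · simpa using hasDerivAt_const y x
    · simpa using hasDerivAt_id' y
  · rw [tri_eucl]
    simp only [grad_sq]
    exact integral_add (triSet_int h _ ((c _).pow 2)) (triSet_int h _ ((c _).pow 2))

lemma sharp_int (h : ℝ) (hh : 0 < h) :
    2 * (∫ p in triSet h, (cos (π / h * p.1) + cos (π / h * p.2)) ^ 2) = h ^ 2 ∧
    2 * ((∫ p in triSet h, (-(π / h * sin (π / h * p.1))) ^ 2)
      + ∫ p in triSet h, (-(π / h * sin (π / h * p.2))) ^ 2) = (π / h) ^ 2 * h ^ 2 := by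
  set k := π / h with hk
  have hk0 : 0 < k := div_pos pi_pos hh
  have hkh : k * h = π := by rw [hk]; field_simp
  have hs : ∀ x, HasDerivAt (fun x => sin (k * x)) (k * cos (k * x)) x := by
    intro x
    have := ((hasDerivAt_id x).const_mul k).sin
    simpa [mul_comm] using this
  have hc : ∀ x, HasDerivAt (fun x => cos (k * x)) (-(k * sin (k * x))) x := by
    intro x
    have := ((hasDerivAt_id x).const_mul k).cos
    simpa [mul_comm] using this
  have ic : (∫ x in (0:ℝ)..h, cos (k * x)) = 0 := by
    have := intervalIntegral.integral_eq_sub_of_hasDerivAt (a := 0) (b := h) (fun x _ => hs x)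
      (by apply Continuous.intervalIntegrable; fun_prop)
    rw [intervalIntegral.integral_const_mul, hkh] at this
    simp only [mul_zero, sin_zero, sin_pi, sub_zero] at this
    exact (mul_eq_zero.1 this).resolve_left hk0.ne'
  have idiff : k * ((∫ x in (0:ℝ)..h, cos (k * x) ^ 2) - ∫ x in (0:ℝ)..h, sin (k * x) ^ 2) = 0 := by
    have := intervalIntegral.integral_eq_sub_of_hasDerivAt (a := 0) (b := h) (fun x _ => (hs x).mul (hc x))
      (by apply Continuous.intervalIntegrable; fun_prop)
    simp only [Pi.mul_apply, hkh, mul_zero, sin_zero, sin_pi, sub_zero, zero_mul] at this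
    rw [← this, ← intervalIntegral.integral_sub, ← intervalIntegral.integral_const_mul]
    · congr 1; ext x; ring
    all_goals (apply Continuous.intervalIntegrable; fun_prop)
  have isum : (∫ x in (0:ℝ)..h, cos (k * x) ^ 2) + (∫ x in (0:ℝ)..h, sin (k * x) ^ 2) = h := by
    rw [← intervalIntegral.integral_add]
    · simp
    all_goals (apply Continuous.intervalIntegrable; fun_prop)
  have idiff' := (mul_eq_zero.1 idiff).resolve_left hk0.ne'
  have ic2 : (∫ x in (0:ℝ)..h, cos (k * x) ^ 2) = h / 2 := by linarith
  have is2 : (∫ x in (0:ℝ)..h, sin (k * x) ^ 2) = h / 2 := by linarith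
  constructor
  · have S := tri_sum h hh.le (fun x y => (cos (k * x) + cos (k * y)) ^ 2)
      (fun x y => (cos (k * x) + cos (k * y)) ^ 2) (by fun_prop) (by fun_prop)
    rw [two_mul, S]
    have e : ∀ x, ((∫ y in (0:ℝ)..x, (cos (k * x) + cos (k * y)) ^ 2) + ∫ y in x..h, (cos (k * y) + cos (k * x)) ^ 2)
        = h * cos (k * x) ^ 2 + h / 2 := by
      intro x
      have : ∀ y, (cos (k * y) + cos (k * x)) ^ 2 = (cos (k * x) + cos (k * y)) ^ 2 := fun y => by ring
      simp only [this]
      rw [intervalIntegral.integral_add_adjacent_intervals]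
      · have : ∀ y, (cos (k * x) + cos (k * y)) ^ 2 = (cos (k * x) ^ 2 + 2 * cos (k * x) * cos (k * y)) + cos (k * y) ^ 2 := fun y => by ring
        simp only [this]
        rw [intervalIntegral.integral_add, intervalIntegral.integral_add, intervalIntegral.integral_const_mul, ic, ic2]
        · simp
        all_goals (apply Continuous.intervalIntegrable; fun_prop)
      all_goals (apply Continuous.intervalIntegrable; fun_prop)
    simp only [e]
    rw [intervalIntegral.integral_add, intervalIntegral.integral_const_mul, ic2]
    · simp; ring
    all_goals (apply Continuous.intervalIntegrable; fun_prop)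
  · have S := tri_sum h hh.le (fun x y => (-(k * sin (k * x))) ^ 2)
      (fun x y => (-(k * sin (k * y))) ^ 2) (by fun_prop) (by fun_prop)
    rw [S]
    have e : ∀ x, ((∫ y in (0:ℝ)..x, (-(k * sin (k * x))) ^ 2) + ∫ y in x..h, (-(k * sin (k * x))) ^ 2)
        = h * k ^ 2 * sin (k * x) ^ 2 := by
      intro x
      rw [intervalIntegral.integral_add_adjacent_intervals]
      · simp; ring
      all_goals (apply Continuous.intervalIntegrable; fun_prop)
    simp only [e]
    rw [intervalIntegral.integral_const_mul, is2]
    ring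

lemma bdry_int (h : ℝ) (hh : 0 < h) :
    (∫ t in (0:ℝ)..h, (cos (π / h * h) + cos (π / h * t))) + (∫ s in (0:ℝ)..h, (cos (π / h * s) + cos (π / h * 0))) = 0 := by
  have hkh : π / h * h = π := by field_simp
  have hk0 : π / h ≠ 0 := (div_pos pi_pos hh).ne'
  rw [hkh, intervalIntegral.integral_add, intervalIntegral.integral_add, intervalIntegral.integral_comp_mul_left _ hk0]
  · rw [hkh]; simp
  all_goals (apply Continuous.intervalIntegrable; fun_prop)



/-- The sharp constant `C₁(Ω,Γ)` in `‖w‖_{L²(Ω)} ≤ C₁ ‖∇w‖_{L²(Ω)}` for functions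
with zero mean trace on `Γ`, where `Ω = {0 < x₂ < x₁ < h}` is an isosceles right
triangle and `Γ` is the union of the two legs
`{x₁ = h, x₂ ∈ [0,h]} ∪ {x₂ = 0, x₁ ∈ [0,h]}`, equals `h/π`. -/
theorem triangle_two_legs_C1 (h : ℝ) (hh : 0 < h) :
    IsLeast {C : ℝ |
      ∀ w : EuclideanSpace ℝ (Fin 2) → ℝ, ContDiff ℝ 1 w →
        ((∫ t in (0:ℝ)..h, w !₂[h, t]) + (∫ s in (0:ℝ)..h, w !₂[s, 0])) = 0 →
        Real.sqrt (∫ x in {x : EuclideanSpace ℝ (Fin 2) |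
            0 < x 1 ∧ x 1 < x 0 ∧ x 0 < h}, (w x) ^ 2) ≤
          C * Real.sqrt (∫ x in {x : EuclideanSpace ℝ (Fin 2) |
            0 < x 1 ∧ x 1 < x 0 ∧ x 0 < h}, ‖gradient w x‖ ^ 2)}
      (h / π) := by
  have hk0 : 0 < π / h := div_pos pi_pos hh
  constructor
  · intro w hw h0
    obtain ⟨u₁, u₂, c1, c2, d1, d2, c, e⟩ := bridge h w hw
    have K := core h hh (fun x y => w !₂[x, y]) u₁ u₂ c c1 c2 d1 d2 h0
    rw [e, tri_eucl h (fun x => w x ^ 2)]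
    set D := (∫ p in triSet h, u₁ p.1 p.2 ^ 2) + ∫ p in triSet h, u₂ p.1 p.2 ^ 2
    have hq : h / π = √((h / π) ^ 2) := (Real.sqrt_sq (by positivity)).symm
    rw [hq, ← Real.sqrt_mul (sq_nonneg _)]
    apply Real.sqrt_le_sqrt
    have : (h / π) ^ 2 * (π / h) ^ 2 = 1 := by
      have := pi_pos.ne'
      field_simp
    have K2 := mul_le_mul_of_nonneg_left K (sq_nonneg (h / π))
    rw [← mul_assoc, this, one_mul] at K2
    exact K2
  · intro C hC
    set w : EuclideanSpace ℝ (Fin 2) → ℝ := fun x => cos (π / h * x 0) + cos (π / h * x 1) with hwdef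
    have hw : ContDiff ℝ 1 w := by
      rw [hwdef]
      fun_prop
    have hb := bdry_int h hh
    have I := hC w hw (by simpa [hwdef] using hb)
    obtain ⟨u₁, u₂, c1, c2, d1, d2, c, e⟩ := bridge h w hw
    have hc : ∀ x, HasDerivAt (fun x => cos (π / h * x)) (-(π / h * sin (π / h * x))) x := by
      intro x
      have := ((hasDerivAt_id x).const_mul (π / h)).cos
      simpa [mul_comm] using this
    have e1 : ∀ x y, u₁ x y = -(π / h * sin (π / h * x)) := fun x y =>
      (d1 x y).unique (by simpa [hwdef] using (hc x).add_const (cos (π / h * y)))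
    have e2 : ∀ x y, u₂ x y = -(π / h * sin (π / h * y)) := fun x y =>
      (d2 x y).unique (by simpa [hwdef] using (hc y).const_add (cos (π / h * x)))
    obtain ⟨s1, s2⟩ := sharp_int h hh
    rw [e, tri_eucl h (fun x => w x ^ 2)] at I
    simp only [e1, e2] at I
    have i1 : (∫ p in triSet h, w !₂[p.1, p.2] ^ 2) = h ^ 2 / 2 := by
      rw [← s1]; simp [hwdef]
    have i2 : ((∫ p in triSet h, (-(π / h * sin (π / h * p.1))) ^ 2)
      + ∫ p in triSet h, (-(π / h * sin (π / h * p.2))) ^ 2) = (π / h) ^ 2 * (h ^ 2 / 2) := by linarith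
    rw [i1, i2, Real.sqrt_mul (sq_nonneg _), Real.sqrt_sq hk0.le] at I
    have pos : 0 < √(h ^ 2 / 2) := Real.sqrt_pos.2 (by positivity)
    have I2 : 1 ≤ C * (π / h) := by
      by_contra hcon
      push Not at hcon
      nlinarith
    rw [div_le_iff₀ pi_pos]
    have := mul_le_mul_of_nonneg_right I2 hh.le
    have e3 : C * (π / h) * h = C * π := by field_simp
    linarith
end
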